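/- arXiv:1808.02133 — 2 statements merged into one kernel-verified Lean document; each statement's English description precedes it below -/
import Mathlib

section
/- Fourier transform of the Poisson-type kernel: For every t > 0 and every ξ ∈ ℝ^d with ξ ≠ 0, the componentwise Fourier transform of ℙ_t is given by ℱ(ℙ_t)(ξ) = e^{−2π|ξ|t} ( I_{d+1} + (2π|ξ|t) · M(ξ) ), where M(ξ) is the complex (d+1)×(d+1) matrix whose upper-left d×d block is −(ξ ⊗ ξ)/|ξ|², whose last column and last row have first d entries equal to −i ξ/|ξ|, and whose (d+1, d+1) entry is 1. -/
open MeasureTheory Filter Set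
open scoped ENNReal NNReal Topology

noncomputable section

abbrev Ed (d : ℕ) : Type := EuclideanSpace ℝ (Fin d)

/-- The surface measure `ω_d` of the unit sphere in `ℝ^{d+1}`. -/
def sphereVol (d : ℕ) : ℝ :=
  ((d : ℝ) + 1) * (volume (Metric.ball (0 : EuclideanSpace ℝ (Fin (d+1))) 1)).toReal

/-- The Poisson kernel `p_t(x)` for the upper half-space `ℝ^d × (0,∞)`. -/
def poissonKernelEd (d : ℕ) (t : ℝ) (x : Ed d) : ℝ :=
  (2 / sphereVol d) * t / (‖x‖ ^ 2 + t ^ 2) ^ (((d : ℝ) + 1) / 2)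

/-- The (componentwise) Poisson integral `u(x,t) = (p_t ∗ f)(x)` of a vector field. -/
def poissonInt (d m : ℕ) (f : Ed d → Ed m) (x : Ed d) (t : ℝ) : Ed m :=
  ∫ y, poissonKernelEd d t y • f (x - y)

/-- The vector `(x, t) ∈ ℝ^{d+1}`. -/
def snocVec (d : ℕ) (x : Ed d) (t : ℝ) : Fin (d + 1) → ℝ := Fin.snoc (fun i => x i) t

/-- The entries `𝔭_t^{jk}(x)` of the Poisson-type matrix kernel `ℙ_t`. -/
def pEntry (d : ℕ) (t : ℝ) (j k : Fin (d + 1)) (x : Ed d) : ℝ :=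
  (2 * ((d : ℝ) + 1) / sphereVol d) * t * snocVec d x t j *
    snocVec d x t k / (‖x‖ ^ 2 + t ^ 2) ^ (((d : ℝ) + 3) / 2)

/-- The Fourier transform `ℱ(g)(ξ) = ∫_{ℝ^d} e^{−2πi ξ·x} g(x) dx` of a real-valued function. -/
def ftR (d : ℕ) (g : Ed d → ℝ) (ξ : Ed d) : ℂ :=
  ∫ x, Complex.exp (((-2 * Real.pi * (inner ℝ ξ x : ℝ) : ℝ) : ℂ) * Complex.I) * (g x : ℂ)

/-- The vector `w(ξ) = (ξ/|ξ|, i) ∈ ℂ^{d+1}`; the matrix `M(ξ)` of the statement is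
`M(ξ) = −w(ξ) ⊗ w(ξ)`. -/
def wvec (d : ℕ) (ξ : Ed d) : Fin (d + 1) → ℂ :=
  Fin.snoc (fun j => ((ξ j / ‖ξ‖ : ℝ) : ℂ)) Complex.I

open scoped FourierTransform RealInnerProductSpace

/-!
By the Gamma integral `Γ(s) A^{-s} = ∫_0^∞ u^{s-1} e^{-uA} du` with `A = |x|² + t²` and
`s = (d+3)/2`, the Fourier transform of `ℙ_t` is a superposition of Fourier transforms of Gaussians
`e^{-u|x|²}` multiplied by two affine functions of `x`. Multiplying by `x` amounts to
differentiating the Gaussian transform, so each of these is an explicit polynomial in `1/u` times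
`u^{-d/2} e^{-π²|ξ|²/u}`. The remaining integrals over `u` are Bessel `K` integrals of orders
`3/2`, `1/2`, `-1/2`. With `u = v²`, the substitution `v ↦ t v - r / v`, `r = π|ξ|`, turns
`t ∫ e^{-(t²u + r²/u)} u^{-1/2} du + r ∫ e^{-(t²u + r²/u)} u^{-3/2} du` into a Gaussian integral.
The two summands are equal by the symmetry under `u ↦ r² / (t² u)`, and order `3/2` follows by
integration by parts.
-/

section BesselIntegral

/-- The integrand of `besselKIntegral`. -/
def besselKIntegrand (ν a b u : ℝ) : ℝ := u ^ (ν - 1) * Real.exp (-(a * u + b / u))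

/-- The integral `∫_0^∞ u^{ν-1} e^{-(au + b/u)} du`, which for `a, b > 0` is
`2 (b/a)^{ν/2} K_ν(2√(ab))` with `K_ν` the modified Bessel function of the second kind. -/
def besselKIntegral (ν a b : ℝ) : ℝ := ∫ u in Ioi 0, besselKIntegrand ν a b u

variable {a b c t r : ℝ}

lemma exp_neg_div_le {u : ℝ} (hb : 0 < b) (hu : 0 < u) (n : ℕ) :
    Real.exp (-(b / u)) ≤ n.factorial * (u / b) ^ n := by
  have h := Real.pow_div_factorial_le_exp (x := b / u) (by positivity) n
  rw [Real.exp_neg, inv_le_comm₀ (Real.exp_pos _) (by positivity)]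
  refine le_trans (le_of_eq ?_) h
  rw [div_pow, div_pow]
  field_simp

lemma integrableOn_besselKIntegrand (ν : ℝ) (ha : 0 < a) (hb : 0 < b) :
    IntegrableOn (besselKIntegrand ν a b) (Ioi 0) := by
  obtain ⟨n, hn⟩ := exists_nat_gt (-ν)
  have hdom : IntegrableOn
      (fun u : ℝ ↦ n.factorial / b ^ n * (u ^ (ν - 1 + n) * Real.exp (-(a * u)))) (Ioi 0) := by
    have h := integrableOn_rpow_mul_exp_neg_mul_rpow (s := ν - 1 + n) (by linarith) one_pos ha
    simp only [Real.rpow_one, neg_mul] at h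
    exact h.const_mul _
  refine hdom.mono' (by unfold besselKIntegrand; fun_prop) ?_
  filter_upwards [ae_restrict_mem measurableSet_Ioi] with u (hu : 0 < u)
  rw [besselKIntegrand, Real.norm_of_nonneg (by positivity), neg_add, Real.exp_add]
  calc u ^ (ν - 1) * (Real.exp (-(a * u)) * Real.exp (-(b / u)))
      ≤ u ^ (ν - 1) * (Real.exp (-(a * u)) * (n.factorial * (u / b) ^ n)) := by
        gcongr; exact exp_neg_div_le hb hu n
    _ = n.factorial / b ^ n * (u ^ (ν - 1 + n) * Real.exp (-(a * u))) := by
        rw [Real.rpow_add hu, Real.rpow_natCast, div_pow]; ring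

lemma tendsto_rpow_mul_exp_neg_add_div_atTop (ν : ℝ) (ha : 0 < a) (hb : 0 ≤ b) :
    Tendsto (fun u : ℝ ↦ u ^ ν * Real.exp (-(a * u + b / u))) atTop (𝓝 0) := by
  refine squeeze_zero' ?_ ?_ (tendsto_rpow_mul_exp_neg_mul_atTop_nhds_zero ν a ha)
  · filter_upwards [eventually_gt_atTop 0] with u hu
    positivity
  · filter_upwards [eventually_gt_atTop 0] with u hu
    have : 0 ≤ b / u := by positivity
    gcongr
    linarith

lemma tendsto_rpow_mul_exp_neg_add_div_nhdsGT_zero (ν : ℝ) (ha : 0 ≤ a) (hb : 0 < b) :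
    Tendsto (fun u : ℝ ↦ u ^ ν * Real.exp (-(a * u + b / u))) (𝓝[>] 0) (𝓝 0) := by
  have h := (tendsto_rpow_mul_exp_neg_add_div_atTop (-ν) hb ha).comp tendsto_inv_nhdsGT_zero
  refine h.congr' ?_
  filter_upwards [self_mem_nhdsWithin] with u (hu : 0 < u)
  simp only [Function.comp_apply, Real.inv_rpow hu.le, Real.rpow_neg hu.le, inv_inv, div_inv_eq_mul,
    ← div_eq_mul_inv, add_comm]

lemma besselKIntegral_recurrence (ν : ℝ) (ha : 0 < a) (hb : 0 < b) :
    ν * besselKIntegral ν a b =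
      a * besselKIntegral (ν + 1) a b - b * besselKIntegral (ν - 1) a b := by
  have hInt (μ : ℝ) := integrableOn_besselKIntegrand μ ha hb
  have hpow (u : ℝ) (hu : u ∈ Ioi 0) : HasDerivAt (fun u ↦ u ^ ν) (ν * u ^ (ν - 1)) u :=
    Real.hasDerivAt_rpow_const (Or.inl (ne_of_gt hu))
  have hexp (u : ℝ) (hu : u ∈ Ioi 0) : HasDerivAt (fun u ↦ Real.exp (-(a * u + b / u)))
      (Real.exp (-(a * u + b / u)) * (-(a - b / u ^ 2))) u := by
    have h := (((hasDerivAt_id u).const_mul a).fun_add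
      ((hasDerivAt_inv (ne_of_gt hu)).const_mul b)).neg.exp
    simpa [div_eq_mul_inv, sub_eq_add_neg] using h
  have hsum : EqOn (fun u ↦ ν * u ^ (ν - 1) * Real.exp (-(a * u + b / u)) +
        u ^ ν * (Real.exp (-(a * u + b / u)) * (-(a - b / u ^ 2))))
      (fun u ↦ ν * besselKIntegrand ν a b u - a * besselKIntegrand (ν + 1) a b u +
        b * besselKIntegrand (ν - 1) a b u) (Ioi 0) := by
    intro u (hu : 0 < u)
    simp only [besselKIntegrand, Real.rpow_sub_one hu.ne', add_sub_cancel_right]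
    field
  have hνa : IntegrableOn (fun u ↦ ν * besselKIntegrand ν a b u -
      a * besselKIntegrand (ν + 1) a b u) (Ioi 0) :=
    ((hInt ν).const_mul ν).sub ((hInt (ν + 1)).const_mul a)
  have hb' := (hInt (ν - 1)).const_mul b
  have h := integral_Ioi_deriv_mul_eq_sub hpow hexp
    ((integrableOn_congr_fun hsum measurableSet_Ioi).2 (hνa.add hb'))
    (tendsto_rpow_mul_exp_neg_add_div_nhdsGT_zero ν ha.le hb)
    (tendsto_rpow_mul_exp_neg_add_div_atTop ν ha hb.le)
  rw [setIntegral_congr_fun measurableSet_Ioi hsum, integral_add hνa hb',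
    integral_sub ((hInt ν).const_mul ν) ((hInt (ν + 1)).const_mul a), integral_const_mul,
    integral_const_mul, integral_const_mul] at h
  simp only [besselKIntegral]
  linarith

lemma besselKIntegral_neg (ν a b : ℝ) : besselKIntegral (-ν) a b = besselKIntegral ν b a := by
  rw [besselKIntegral, ← integral_comp_rpow_Ioi _ (neg_ne_zero.2 one_ne_zero)]
  refine setIntegral_congr_fun measurableSet_Ioi fun u (hu : 0 < u) ↦ ?_
  simp only [besselKIntegrand, abs_neg, abs_one, one_mul, smul_eq_mul, Real.rpow_neg_one,
    Real.inv_rpow hu.le, div_inv_eq_mul, ← div_eq_mul_inv, ← mul_assoc, ← Real.rpow_neg hu.le,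
    ← Real.rpow_add hu]
  ring_nf

lemma besselKIntegral_mul_div (ν a b : ℝ) (hc : 0 < c) :
    c ^ ν * besselKIntegral ν (c * a) (b / c) = besselKIntegral ν a b := by
  have h := integral_comp_mul_left_Ioi (besselKIntegrand ν a b) 0 hc
  rw [mul_zero, smul_eq_mul, eq_inv_mul_iff_mul_eq₀ hc.ne', ← integral_const_mul] at h
  rw [besselKIntegral, besselKIntegral, ← integral_const_mul, ← h]
  refine setIntegral_congr_fun measurableSet_Ioi fun u (hu : 0 < u) ↦ ?_
  simp only [besselKIntegrand, Real.mul_rpow hc.le hu.le, Real.rpow_sub_one hc.ne']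
  field_simp

/-- The Cauchy–Schlömilch substitution. -/
lemma integral_comp_mul_sub_div {E : Type*} [NormedAddCommGroup E] [NormedSpace ℝ E]
    (g : ℝ → E) (ht : 0 < t) (hr : 0 < r) :
    ∫ v in Ioi 0, (t + r / v ^ 2) • g (t * v - r / v) = ∫ y, g y := by
  have hderiv (v : ℝ) (hv : v ∈ Ioi 0) :
      HasDerivWithinAt (fun v ↦ t * v - r / v) (t + r / v ^ 2) (Ioi 0) v := by
    have h := ((hasDerivAt_id v).const_mul t).fun_sub
      ((hasDerivAt_inv (ne_of_gt hv)).const_mul r)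
    simpa [div_eq_mul_inv] using h.hasDerivWithinAt
  have hmono : MonotoneOn (fun v : ℝ ↦ t * v - r / v) (Ioi 0) := by
    intro v (hv : 0 < v) w _ hvw
    dsimp only
    gcongr
  have himage : (fun v ↦ t * v - r / v) '' Ioi 0 = univ := by
    refine eq_univ_of_forall fun y ↦ ?_
    obtain ⟨s, hs, hsq⟩ : ∃ s, |y| < s ∧ s ^ 2 = y ^ 2 + 4 * t * r := by
      refine ⟨√(y ^ 2 + 4 * t * r), Real.lt_sqrt_of_sq_lt ?_, Real.sq_sqrt (by positivity)⟩
      rw [sq_abs]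
      nlinarith [mul_pos ht hr]
    have hpos : 0 < y + s := by linarith [neg_abs_le y]
    refine ⟨(y + s) / (2 * t), div_pos hpos (by positivity), ?_⟩
    have := hpos.ne'
    field_simp
    linear_combination hsq
  have h := integral_image_eq_integral_deriv_smul_of_monotoneOn measurableSet_Ioi hderiv hmono g
  rw [himage, setIntegral_univ] at h
  exact h.symm

lemma mul_besselKIntegral_half_add (ht : 0 < t) (hr : 0 < r) :
    t * besselKIntegral (1 / 2) (t ^ 2) (r ^ 2) + r * besselKIntegral (-(1 / 2)) (t ^ 2) (r ^ 2) =
      2 * √Real.pi * Real.exp (-(2 * t * r)) := by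
  have hInt (ν : ℝ) := integrableOn_besselKIntegrand ν (sq_pos_of_pos ht) (sq_pos_of_pos hr)
  have hgauss := integral_comp_mul_sub_div (fun y ↦ Real.exp (-1 * y ^ 2)) ht hr
  rw [integral_gaussian, div_one] at hgauss
  rw [besselKIntegral, besselKIntegral, ← integral_const_mul, ← integral_const_mul,
    ← integral_add ((hInt _).const_mul t) ((hInt _).const_mul r),
    ← integral_comp_rpow_Ioi_of_pos two_pos, ← hgauss, mul_right_comm, ← integral_const_mul]
  refine setIntegral_congr_fun measurableSet_Ioi fun v (hv : 0 < v) ↦ ?_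
  have hsplit : Real.exp (-(t ^ 2 * v ^ 2 + r ^ 2 / v ^ 2)) =
      Real.exp (-(2 * t * r)) * Real.exp (-1 * (t * v - r / v) ^ 2) := by
    rw [← Real.exp_add]; congr 1; field
  have hpow (μ : ℝ) : (v ^ 2) ^ μ = v ^ (2 * μ) := by
    rw [Real.rpow_mul hv.le, Real.rpow_two]
  simp only [besselKIntegrand, smul_eq_mul, Real.rpow_two, hsplit, hpow]
  rw [show (2 : ℝ) - 1 = 1 by norm_num, show (2 : ℝ) * (1 / 2 - 1) = -1 by norm_num,
    show (2 : ℝ) * (-(1 / 2) - 1) = -(3 : ℕ) by norm_num, Real.rpow_one, Real.rpow_neg_one,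
    Real.rpow_neg hv.le, Real.rpow_natCast]
  field

lemma mul_besselKIntegral_half (ht : 0 < t) (hr : 0 < r) :
    t * besselKIntegral (1 / 2) (t ^ 2) (r ^ 2) =
      r * besselKIntegral (-(1 / 2)) (t ^ 2) (r ^ 2) := by
  have hscale := besselKIntegral_mul_div (1 / 2) (t ^ 2) (r ^ 2) (c := (r / t) ^ 2) (by positivity)
  rw [← Real.sqrt_eq_rpow, Real.sqrt_sq (by positivity),
    show (r / t) ^ 2 * t ^ 2 = r ^ 2 by field, show r ^ 2 / (r / t) ^ 2 = t ^ 2 by field] at hscale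
  rw [besselKIntegral_neg, ← hscale]
  field

lemma besselKIntegral_half (ht : 0 < t) (hr : 0 < r) :
    besselKIntegral (1 / 2) (t ^ 2) (r ^ 2) = √Real.pi / t * Real.exp (-(2 * t * r)) := by
  have hadd := mul_besselKIntegral_half_add ht hr
  have heq := mul_besselKIntegral_half ht hr
  field_simp
  linarith

lemma besselKIntegral_neg_half (ht : 0 < t) (hr : 0 < r) :
    besselKIntegral (-(1 / 2)) (t ^ 2) (r ^ 2) = √Real.pi / r * Real.exp (-(2 * t * r)) := by
  rw [besselKIntegral_neg, besselKIntegral_half hr ht, mul_right_comm]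

lemma besselKIntegral_three_halves (ht : 0 < t) (hr : 0 < r) :
    besselKIntegral (3 / 2) (t ^ 2) (r ^ 2) =
      √Real.pi * (1 + 2 * t * r) / (2 * t ^ 3) * Real.exp (-(2 * t * r)) := by
  have h := besselKIntegral_recurrence (1 / 2) (sq_pos_of_pos ht) (sq_pos_of_pos hr)
  rw [show (1 / 2 + 1 : ℝ) = 3 / 2 by norm_num, show (1 / 2 - 1 : ℝ) = -(1 / 2) by norm_num,
    besselKIntegral_half ht hr, besselKIntegral_neg_half ht hr] at h
  field_simp at h ⊢
  linarith

end BesselIntegral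

section Subordination

variable {α E : Type*} [MeasurableSpace α] {μ : Measure α} [NormedAddCommGroup E] [NormedSpace ℝ E]
  {A : α → ℝ} {h : α → E} {s : ℝ}

lemma integrable_prod_rpow_mul_exp_neg_mul_smul (hs : 0 < s) (hA : Measurable A)
    (hpos : ∀ x, 0 < A x) (hint : Integrable (fun x ↦ A x ^ (-s) • h x) μ) :
    Integrable (fun p : α × ℝ ↦ (p.2 ^ (s - 1) * Real.exp (-(A p.1 * p.2))) • h p.1)
      (μ.prod (volume.restrict (Ioi 0))) := by
  have hh : AEStronglyMeasurable h μ := by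
    refine (((hA.pow_const s).aestronglyMeasurable).smul hint.1).congr (ae_of_all _ fun x ↦ ?_)
    simp [smul_smul, ← Real.rpow_add (hpos x)]
  have hmeas : AEStronglyMeasurable
      (fun p : α × ℝ ↦ (p.2 ^ (s - 1) * Real.exp (-(A p.1 * p.2))) • h p.1)
      (μ.prod (volume.restrict (Ioi 0))) := by
    refine AEStronglyMeasurable.smul ?_ hh.comp_fst
    have : Measurable fun p : α × ℝ ↦ p.2 ^ (s - 1) * Real.exp (-(A p.1 * p.2)) := by fun_prop
    exact this.aestronglyMeasurable
  refine (integrable_prod_iff hmeas).2 ⟨ae_of_all _ fun x ↦ ?_, ?_⟩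
  · have hgamma :=
      integrableOn_rpow_mul_exp_neg_mul_rpow (s := s - 1) (by linarith) one_pos (hpos x)
    simp only [Real.rpow_one, neg_mul] at hgamma
    exact Integrable.smul_const hgamma (h x)
  · refine (hint.norm.const_mul (Real.Gamma s)).congr (ae_of_all _ fun x ↦ ?_)
    have hnorm : EqOn (fun u ↦ ‖(u ^ (s - 1) * Real.exp (-(A x * u))) • h x‖)
        (fun u ↦ u ^ (s - 1) * Real.exp (-(A x * u)) * ‖h x‖) (Ioi 0) := fun u (hu : 0 < u) ↦ by
      simp only [norm_smul, Real.norm_of_nonneg (by positivity :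
        0 ≤ u ^ (s - 1) * Real.exp (-(A x * u)))]
    have := hpos x
    simp only [setIntegral_congr_fun measurableSet_Ioi hnorm]
    rw [integral_mul_const, Real.integral_rpow_mul_exp_neg_mul_Ioi hs (hpos x), norm_smul,
      Real.norm_of_nonneg (by positivity), one_div, Real.inv_rpow (hpos x).le,
      Real.rpow_neg (hpos x).le]
    ring

lemma Gamma_smul_integral_rpow_neg_smul [SFinite μ] [CompleteSpace E] (hs : 0 < s)
    (hA : Measurable A) (hpos : ∀ x, 0 < A x) (hint : Integrable (fun x ↦ A x ^ (-s) • h x) μ) :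
    Real.Gamma s • ∫ x, A x ^ (-s) • h x ∂μ =
      ∫ u in Ioi 0, u ^ (s - 1) • ∫ x, Real.exp (-(A x * u)) • h x ∂μ := by
  have hgamma (x : α) : Real.Gamma s • A x ^ (-s) • h x =
      ∫ u in Ioi 0, (u ^ (s - 1) * Real.exp (-(A x * u))) • h x := by
    rw [integral_smul_const, Real.integral_rpow_mul_exp_neg_mul_Ioi hs (hpos x), smul_smul,
      one_div, Real.inv_rpow (hpos x).le, Real.rpow_neg (hpos x).le, mul_comm]
  rw [← integral_smul]
  simp only [hgamma]
  rw [integral_integral_swap (integrable_prod_rpow_mul_exp_neg_mul_smul hs hA hpos hint)]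
  simp only [mul_smul, integral_smul]

end Subordination

section Fourier

variable {V : Type*} [NormedAddCommGroup V] [InnerProductSpace ℝ V]

lemma hasLineDerivAt_cexp_mul_norm_sq (a : ℂ) (ξ v : V) :
    HasLineDerivAt ℝ (fun ξ : V ↦ Complex.exp (a * ‖ξ‖ ^ 2))
      (2 * a * ⟪ξ, v⟫ * Complex.exp (a * ‖ξ‖ ^ 2)) ξ v := by
  have h : HasDerivAt (fun s : ℝ ↦ ξ + s • v) v 0 := by
    simpa using ((hasDerivAt_id (0 : ℝ)).smul_const v).const_add ξ
  have h' := (h.norm_sq.ofReal_comp.const_mul a).cexp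
  simp only [zero_smul, add_zero, Complex.ofReal_pow, Complex.ofReal_mul,
    Complex.ofReal_ofNat] at h'
  exact h'.congr_deriv (by ring)

lemma norm_pow_mul_exp_neg_mul_sq_norm_le {E : Type*} [SeminormedAddGroup E] {b : ℝ} (hb : 0 < b)
    (k : ℕ) (x : E) : ‖x‖ ^ k * Real.exp (-b * ‖x‖ ^ 2) ≤
      k.factorial * Real.exp (1 / (2 * b)) * Real.exp (-(b / 2) * ‖x‖ ^ 2) := by
  have hpow : ‖x‖ ^ k ≤ k.factorial * Real.exp ‖x‖ :=
    (div_le_iff₀' (by positivity)).1 (Real.pow_div_factorial_le_exp _ (norm_nonneg x) k)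
  have hsq : ‖x‖ + -b * ‖x‖ ^ 2 ≤ 1 / (2 * b) + -(b / 2) * ‖x‖ ^ 2 := by
    have : 0 ≤ b / 2 * (‖x‖ - 1 / b) ^ 2 := by positivity
    have heq : b / 2 * (‖x‖ - 1 / b) ^ 2 = b / 2 * ‖x‖ ^ 2 - ‖x‖ + 1 / (2 * b) := by field
    linarith
  calc ‖x‖ ^ k * Real.exp (-b * ‖x‖ ^ 2)
      ≤ k.factorial * Real.exp ‖x‖ * Real.exp (-b * ‖x‖ ^ 2) := by gcongr
    _ = k.factorial * Real.exp (‖x‖ + -b * ‖x‖ ^ 2) := by rw [mul_assoc, Real.exp_add]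
    _ ≤ k.factorial * Real.exp (1 / (2 * b) + -(b / 2) * ‖x‖ ^ 2) := by gcongr
    _ = _ := by rw [Real.exp_add, mul_assoc]

variable [FiniteDimensional ℝ V] [MeasurableSpace V] [BorelSpace V]

lemma Gamma_smul_fourier_rpow_neg_smul {E : Type*} [NormedAddCommGroup E] [NormedSpace ℂ E]
    [CompleteSpace E] {s : ℝ} (hs : 0 < s) {A : V → ℝ} (hA : Measurable A) (hpos : ∀ x, 0 < A x)
    {f : V → E} (hint : Integrable (fun x ↦ A x ^ (-s) • f x)) (ξ : V) :
    Real.Gamma s • 𝓕 (fun x ↦ A x ^ (-s) • f x) ξ =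
      ∫ u in Ioi 0, u ^ (s - 1) • 𝓕 (fun x ↦ Real.exp (-(A x * u)) • f x) ξ := by
  have hcomm (a : ℝ) (x : V) : Real.fourierChar (-⟪x, ξ⟫) • a • f x =
      a • Real.fourierChar (-⟪x, ξ⟫) • f x := smul_comm _ _ _
  have hchar : Integrable (fun x ↦ A x ^ (-s) • Real.fourierChar (-⟪x, ξ⟫) • f x) := by
    simpa only [hcomm] using (Real.fourierIntegral_convergent_iff ξ).2 hint
  simp only [Real.fourier_eq, hcomm]
  exact Gamma_smul_integral_rpow_neg_smul hs hA hpos hchar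

lemma fourier_add_apply {f g : V → ℂ} (hf : Integrable f) (hg : Integrable g) (ξ : V) :
    𝓕 (fun x ↦ f x + g x) ξ = 𝓕 f ξ + 𝓕 g ξ := by
  simp only [Real.fourier_eq, smul_add]
  exact integral_add ((Real.fourierIntegral_convergent_iff ξ).2 hf)
    ((Real.fourierIntegral_convergent_iff ξ).2 hg)

lemma fourier_const_mul_apply (c : ℂ) (f : V → ℂ) (ξ : V) :
    𝓕 (fun x ↦ c * f x) ξ = c * 𝓕 f ξ := by
  simp only [Real.fourier_eq, Circle.smul_def, smul_eq_mul, mul_left_comm _ c]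
  exact integral_const_mul c _

lemma fourier_inner_mul {f : V → ℂ} (hf : Integrable f) (hf' : Integrable fun x ↦ ‖x‖ * ‖f x‖)
    {f' : ℂ} {ξ v : V} (hderiv : HasLineDerivAt ℝ (𝓕 f) f' ξ v) :
    𝓕 (fun x ↦ ⟪x, v⟫ * f x) ξ = Complex.I / (2 * Real.pi) * f' := by
  have hint : Integrable (VectorFourier.fourierSMulRight (innerSL ℝ) f) := by
    refine (hf'.const_mul (2 * Real.pi)).mono' hf.1.fourierSMulRight (ae_of_all _ fun x ↦ ?_)
    rw [VectorFourier.norm_fourierSMulRight, innerSL_apply_norm, mul_assoc]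
  have h := ((Real.hasFDerivAt_fourier hf hf' ξ).hasLineDerivAt v).unique hderiv
  rw [Real.fourier_continuousLinearMap_apply hint] at h
  simp only [VectorFourier.fourierSMulRight_apply, innerSL_apply_apply ℝ] at h
  rw [← h, ← fourier_const_mul_apply]
  refine congrFun (congrArg 𝓕 (funext fun x ↦ ?_)) ξ
  simp only [smul_eq_mul, Complex.real_smul]
  field_simp
  simp

/-- All absolute moments of `f` are finite; unlike Schwartz decay, this asks nothing of the
derivatives of `f`. -/
def HasFiniteMoments (f : V → ℂ) : Prop :=
  AEStronglyMeasurable f ∧ ∀ k : ℕ, Integrable fun x ↦ ‖x‖ ^ k * ‖f x‖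

namespace HasFiniteMoments

variable {f : V → ℂ}

lemma integrable (hf : HasFiniteMoments f) : Integrable f := by
  simpa [integrable_norm_iff hf.1] using hf.2 0

lemma integrable_norm_mul_norm (hf : HasFiniteMoments f) : Integrable fun x ↦ ‖x‖ * ‖f x‖ := by
  simpa using hf.2 1

lemma inner_add_mul (hf : HasFiniteMoments f) (v : V) (c : ℂ) :
    HasFiniteMoments fun x ↦ (⟪x, v⟫ + c) * f x := by
  have hmeas : AEStronglyMeasurable fun x ↦ (⟪x, v⟫ + c) * f x :=
    AEStronglyMeasurable.mul (by fun_prop) hf.1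
  refine ⟨hmeas, fun k ↦ ?_⟩
  refine (((hf.2 (k + 1)).const_mul ‖v‖).add ((hf.2 k).const_mul ‖c‖)).mono'
    (AEStronglyMeasurable.mul (by fun_prop) hmeas.norm) (ae_of_all _ fun x ↦ ?_)
  have hlin : ‖(⟪x, v⟫ + c : ℂ)‖ ≤ ‖x‖ * ‖v‖ + ‖c‖ :=
    (norm_add_le _ _).trans (by
      gcongr
      simpa using abs_real_inner_le_norm x v)
  calc ‖‖x‖ ^ k * ‖(⟪x, v⟫ + c) * f x‖‖ = ‖x‖ ^ k * (‖(⟪x, v⟫ + c : ℂ)‖ * ‖f x‖) := by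
        rw [norm_mul, norm_norm, norm_mul, norm_pow, norm_norm]
    _ ≤ ‖x‖ ^ k * ((‖x‖ * ‖v‖ + ‖c‖) * ‖f x‖) := by gcongr
    _ = ‖v‖ * (‖x‖ ^ (k + 1) * ‖f x‖) + ‖c‖ * (‖x‖ ^ k * ‖f x‖) := by ring

lemma fourier_inner_add_mul (hf : HasFiniteMoments f) {f' : ℂ} {ξ v : V}
    (hderiv : HasLineDerivAt ℝ (𝓕 f) f' ξ v) (c : ℂ) :
    𝓕 (fun x ↦ (⟪x, v⟫ + c) * f x) ξ = Complex.I / (2 * Real.pi) * f' + c * 𝓕 f ξ := by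
  have hinner : Integrable fun x ↦ (⟪x, v⟫ : ℂ) * f x := by
    simpa using (hf.inner_add_mul v 0).integrable
  simp only [add_mul]
  rw [fourier_add_apply hinner (hf.integrable.const_mul c), fourier_const_mul_apply,
    fourier_inner_mul hf.integrable hf.integrable_norm_mul_norm hderiv]

end HasFiniteMoments

lemma hasFiniteMoments_cexp_neg_mul_sq_norm {b : ℂ} (hb : 0 < b.re) :
    HasFiniteMoments fun x : V ↦ Complex.exp (-b * ‖x‖ ^ 2) := by
  have hmeas : AEStronglyMeasurable fun x : V ↦ Complex.exp (-b * ‖x‖ ^ 2) := by fun_prop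
  have hdom : Integrable fun x : V ↦ Real.exp (-(b.re / 2) * ‖x‖ ^ 2) := by
    have h := (GaussianFourier.integrable_cexp_neg_mul_sq_norm_add (V := V) (b := b / 2)
      (by simpa using half_pos hb) 0 0).norm
    simpa only [zero_mul, add_zero, norm_cexp_neg_mul_sq, Complex.div_ofNat_re] using h
  refine ⟨hmeas, fun k ↦ (hdom.const_mul (k.factorial * Real.exp (1 / (2 * b.re)))).mono'
    (AEStronglyMeasurable.mul (by fun_prop) hmeas.norm) (ae_of_all _ fun x ↦ ?_)⟩
  rw [norm_cexp_neg_mul_sq, Real.norm_of_nonneg (by positivity)]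
  exact norm_pow_mul_exp_neg_mul_sq_norm_le hb k x

end Fourier

section Gaussian

variable {V : Type*} [NormedAddCommGroup V] [InnerProductSpace ℝ V] [FiniteDimensional ℝ V]
  [MeasurableSpace V] [BorelSpace V] {b : ℂ}

lemma hasLineDerivAt_fourier_gaussian (hb : 0 < b.re) (ξ v : V) :
    HasLineDerivAt ℝ (𝓕 fun x : V ↦ Complex.exp (-b * ‖x‖ ^ 2))
      (-(2 * Real.pi ^ 2 / b) * ⟪ξ, v⟫ * 𝓕 (fun x : V ↦ Complex.exp (-b * ‖x‖ ^ 2)) ξ) ξ v := by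
  have hfourier : 𝓕 (fun x : V ↦ Complex.exp (-b * ‖x‖ ^ 2)) = fun ξ ↦
      (Real.pi / b) ^ (Module.finrank ℝ V / 2 : ℂ) *
        Complex.exp (-Real.pi ^ 2 / b * ‖ξ‖ ^ 2) := by
    ext ξ
    rw [fourier_gaussian_innerProductSpace hb, div_mul_eq_mul_div]
  have h := HasDerivAt.const_mul ((Real.pi / b) ^ (Module.finrank ℝ V / 2 : ℂ))
    (hasLineDerivAt_cexp_mul_norm_sq (-Real.pi ^ 2 / b) ξ v)
  rw [hfourier]
  exact h.congr_deriv (by ring)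

lemma fourier_inner_add_mul_gaussian (hb : 0 < b.re) (v ξ : V) (c : ℂ) :
    𝓕 (fun x : V ↦ (⟪x, v⟫ + c) * Complex.exp (-b * ‖x‖ ^ 2)) ξ =
      (c - Complex.I * Real.pi / b * ⟪ξ, v⟫) *
        𝓕 (fun x : V ↦ Complex.exp (-b * ‖x‖ ^ 2)) ξ := by
  rw [(hasFiniteMoments_cexp_neg_mul_sq_norm hb).fourier_inner_add_mul
    (hasLineDerivAt_fourier_gaussian hb ξ v)]
  field

lemma fourier_inner_add_mul_inner_add_mul_gaussian (hb : 0 < b.re) (v w ξ : V) (c c' : ℂ) :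
    𝓕 (fun x : V ↦ (⟪x, v⟫ + c) * ((⟪x, w⟫ + c') * Complex.exp (-b * ‖x‖ ^ 2))) ξ =
      (⟪v, w⟫ / (2 * b) + (c - Complex.I * Real.pi / b * ⟪ξ, v⟫) *
        (c' - Complex.I * Real.pi / b * ⟪ξ, w⟫)) *
          𝓕 (fun x : V ↦ Complex.exp (-b * ‖x‖ ^ 2)) ξ := by
  have hlin : HasLineDerivAt ℝ (fun ξ : V ↦ c' - Complex.I * Real.pi / b * ⟪ξ, w⟫)
      (-(Complex.I * Real.pi / b * ⟪v, w⟫)) ξ v := by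
    have hline : HasDerivAt (fun s : ℝ ↦ ξ + s • v) v 0 := by
      simpa using ((hasDerivAt_id (0 : ℝ)).smul_const v).const_add ξ
    have h := ((hline.inner ℝ (hasDerivAt_const 0 w)).ofReal_comp.const_mul
      (Complex.I * Real.pi / b)).const_sub c'
    simpa [HasLineDerivAt] using h
  have hderiv : HasLineDerivAt ℝ (𝓕 fun x : V ↦ (⟪x, w⟫ + c') * Complex.exp (-b * ‖x‖ ^ 2))
      (-(Complex.I * Real.pi / b * ⟪v, w⟫) * 𝓕 (fun x : V ↦ Complex.exp (-b * ‖x‖ ^ 2)) ξ +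
        (c' - Complex.I * Real.pi / b * ⟪ξ, w⟫) * (-(2 * Real.pi ^ 2 / b) * ⟪ξ, v⟫ *
          𝓕 (fun x : V ↦ Complex.exp (-b * ‖x‖ ^ 2)) ξ)) ξ v := by
    rw [funext fun ξ ↦ fourier_inner_add_mul_gaussian hb w ξ c']
    simpa [HasLineDerivAt] using HasDerivAt.fun_mul hlin (hasLineDerivAt_fourier_gaussian hb ξ v)
  rw [((hasFiniteMoments_cexp_neg_mul_sq_norm hb).inner_add_mul w c').fourier_inner_add_mul hderiv,
    fourier_inner_add_mul_gaussian hb]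
  field_simp
  ring_nf
  rw [Complex.I_sq]
  ring

end Gaussian

section PoissonTypeKernel

lemma sphereVol_eq (d : ℕ) :
    sphereVol d = (d + 1) * (Real.pi ^ ((d + 1 : ℝ) / 2) / Real.Gamma ((d + 3 : ℝ) / 2)) := by
  have hpi : √Real.pi ^ (d + 1) = Real.pi ^ ((d + 1 : ℝ) / 2) := by
    rw [Real.sqrt_eq_rpow, ← Real.rpow_mul_natCast Real.pi_pos.le]
    push_cast
    ring_nf
  have hcast : ((d + 1 : ℕ) : ℝ) / 2 + 1 = (d + 3) / 2 := by push_cast; ring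
  have hnonneg : 0 ≤ Real.pi ^ ((d + 1 : ℝ) / 2) / Real.Gamma ((d + 3 : ℝ) / 2) := by
    have := Real.Gamma_pos_of_pos (s := (d + 3 : ℝ) / 2) (by positivity)
    positivity
  rw [sphereVol, EuclideanSpace.volume_ball, Fintype.card_fin, hpi, hcast, ENNReal.ofReal_one,
    one_pow, one_mul, ENNReal.toReal_ofReal hnonneg]

lemma two_mul_div_sphereVol (d : ℕ) : 2 * ((d : ℝ) + 1) / sphereVol d =
    2 / Real.pi ^ ((d + 1 : ℝ) / 2) * Real.Gamma ((d + 3 : ℝ) / 2) := by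
  rw [sphereVol_eq]
  field

variable {V : Type*} [NormedAddCommGroup V] [InnerProductSpace ℝ V] {t : ℝ}

lemma norm_inner_add_le_mul_sqrt (ht : 0 < t) (x v : V) (c : ℂ) :
    ‖(⟪x, v⟫ + c : ℂ)‖ ≤ (‖v‖ + ‖c‖ / t) * √(‖x‖ ^ 2 + t ^ 2) := by
  have hx : ‖x‖ ≤ √(‖x‖ ^ 2 + t ^ 2) := Real.le_sqrt_of_sq_le (by linarith [sq_nonneg t])
  have htx : t ≤ √(‖x‖ ^ 2 + t ^ 2) := Real.le_sqrt_of_sq_le (by linarith [sq_nonneg ‖x‖])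
  calc ‖(⟪x, v⟫ + c : ℂ)‖ ≤ ‖x‖ * ‖v‖ + ‖c‖ / t * t := by
        rw [div_mul_cancel₀ _ ht.ne']
        refine (norm_add_le _ _).trans ?_
        gcongr
        simpa using abs_real_inner_le_norm x v
    _ ≤ √(‖x‖ ^ 2 + t ^ 2) * ‖v‖ + ‖c‖ / t * √(‖x‖ ^ 2 + t ^ 2) := by gcongr
    _ = _ := by ring

/-- The bilinear form with matrix `ℙ_t(x)` on `V × ℝ`, for `V` of dimension `d` in place of
`ℝ^d`; the entries of `ℙ_t(x)` are its values at pairs of basis vectors. -/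
def poissonTypeKernel (t : ℝ) (y z : WithLp 2 (V × ℝ)) (x : V) : ℝ :=
  2 * (Module.finrank ℝ V + 1) / sphereVol (Module.finrank ℝ V) * t *
    ⟪WithLp.toLp 2 (x, t), y⟫ * ⟪WithLp.toLp 2 (x, t), z⟫ /
      (‖x‖ ^ 2 + t ^ 2) ^ ((Module.finrank ℝ V + 3 : ℝ) / 2)

/-- The linear functional `y ↦ w(ξ) · y` on `V × ℝ`, where `w(ξ) = (ξ/|ξ|, i)`. -/
def poissonTypeCovector (ξ : V) (y : WithLp 2 (V × ℝ)) : ℂ :=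
  ⟪ξ, y.fst⟫ / ‖ξ‖ + y.snd * Complex.I

lemma poissonTypeKernel_eq_rpow_neg_smul (ht : 0 < t) (y z : WithLp 2 (V × ℝ)) (x : V) :
    (poissonTypeKernel t y z x : ℂ) =
      (2 * (Module.finrank ℝ V + 1) / sphereVol (Module.finrank ℝ V) * t : ℝ) *
        ((‖x‖ ^ 2 + t ^ 2) ^ (-((Module.finrank ℝ V + 3 : ℝ) / 2)) •
          ((⟪x, y.fst⟫ + (t * y.snd : ℝ)) * (⟪x, z.fst⟫ + (t * z.snd : ℝ)))) := by
  have hinner (y : WithLp 2 (V × ℝ)) : ⟪WithLp.toLp 2 (x, t), y⟫ = ⟪x, y.fst⟫ + t * y.snd := by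
    simp [WithLp.prod_inner_apply, mul_comm]
  rw [poissonTypeKernel, hinner, hinner, Real.rpow_neg (by positivity), div_eq_mul_inv,
    Complex.real_smul]
  push_cast
  ring

variable [FiniteDimensional ℝ V] [MeasurableSpace V] [BorelSpace V]

lemma integrable_norm_sq_add_sq_rpow_neg (ht : 0 < t) {s : ℝ}
    (hs : Module.finrank ℝ V < 2 * s) :
    Integrable fun x : V ↦ (‖x‖ ^ 2 + t ^ 2) ^ (-s) := by
  have h := ((integrable_rpow_neg_one_add_norm_sq (E := V) (μ := volume) hs).comp_smul
    (inv_ne_zero ht.ne')).const_mul ((t ^ 2) ^ (-s))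
  refine h.congr (ae_of_all _ fun x ↦ ?_)
  dsimp only
  rw [neg_div, mul_div_cancel_left₀ _ two_ne_zero,
    ← Real.mul_rpow (by positivity) (by positivity), norm_smul,
    Real.norm_of_nonneg (by positivity)]
  congr 1
  field

lemma integrable_rpow_neg_smul_inner_add_mul_inner_add (ht : 0 < t) {s : ℝ}
    (hs : Module.finrank ℝ V + 2 < 2 * s) (v w : V) (c c' : ℂ) :
    Integrable fun x : V ↦ (‖x‖ ^ 2 + t ^ 2) ^ (-s) • ((⟪x, v⟫ + c) * (⟪x, w⟫ + c')) := by
  have hdom := (integrable_norm_sq_add_sq_rpow_neg (V := V) ht (s := s - 1)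
    (by linarith)).const_mul ((‖v‖ + ‖c‖ / t) * (‖w‖ + ‖c'‖ / t))
  have hmeas : Measurable fun x : V ↦
      (‖x‖ ^ 2 + t ^ 2) ^ (-s) • ((⟪x, v⟫ + c : ℂ) * (⟪x, w⟫ + c')) := by fun_prop
  refine hdom.mono' hmeas.aestronglyMeasurable (ae_of_all _ fun x ↦ ?_)
  have hA : 0 < ‖x‖ ^ 2 + t ^ 2 := by positivity
  rw [norm_smul, norm_mul, Real.norm_of_nonneg (by positivity)]
  calc (‖x‖ ^ 2 + t ^ 2) ^ (-s) * (‖(⟪x, v⟫ + c : ℂ)‖ * ‖(⟪x, w⟫ + c' : ℂ)‖)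
      ≤ (‖x‖ ^ 2 + t ^ 2) ^ (-s) * ((‖v‖ + ‖c‖ / t) * √(‖x‖ ^ 2 + t ^ 2) *
          ((‖w‖ + ‖c'‖ / t) * √(‖x‖ ^ 2 + t ^ 2))) := by
        gcongr <;> exact norm_inner_add_le_mul_sqrt ht x _ _
    _ = (‖v‖ + ‖c‖ / t) * (‖w‖ + ‖c'‖ / t) *
          ((‖x‖ ^ 2 + t ^ 2) ^ (-s) * (√(‖x‖ ^ 2 + t ^ 2) * √(‖x‖ ^ 2 + t ^ 2))) := by ring
    _ = _ := by rw [Real.mul_self_sqrt hA.le, ← Real.rpow_add_one hA.ne', neg_sub, sub_eq_neg_add]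

lemma fourier_exp_neg_mul_smul_inner_add_mul_inner_add {u : ℝ} (hu : 0 < u) (v w ξ : V)
    (c c' : ℂ) :
    𝓕 (fun x : V ↦ Real.exp (-((‖x‖ ^ 2 + t ^ 2) * u)) • ((⟪x, v⟫ + c) * (⟪x, w⟫ + c'))) ξ =
      (⟪v, w⟫ / (2 * u) + (c - Complex.I * Real.pi / u * ⟪ξ, v⟫) *
        (c' - Complex.I * Real.pi / u * ⟪ξ, w⟫)) * ((Real.pi / u) ^ (Module.finrank ℝ V / 2 : ℝ) *
          Real.exp (-(t ^ 2 * u + (Real.pi * ‖ξ‖) ^ 2 / u)) : ℝ) := by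
  have hfactor (x : V) :
      Real.exp (-((‖x‖ ^ 2 + t ^ 2) * u)) • ((⟪x, v⟫ + c) * (⟪x, w⟫ + c') : ℂ) =
        Complex.exp (-(t ^ 2 * u)) *
          ((⟪x, v⟫ + c) * ((⟪x, w⟫ + c') * Complex.exp (-u * ‖x‖ ^ 2))) := by
    rw [Complex.real_smul, Complex.ofReal_exp]
    push_cast
    rw [show (-((‖x‖ ^ 2 + t ^ 2) * u) : ℂ) = -(t ^ 2 * u) + -u * ‖x‖ ^ 2 by ring, Complex.exp_add]
    ring
  have hu' : 0 < (u : ℂ).re := hu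
  simp only [hfactor]
  rw [fourier_const_mul_apply, fourier_inner_add_mul_inner_add_mul_gaussian hu',
    fourier_gaussian_innerProductSpace hu', mul_left_comm]
  congr 1
  push_cast [Complex.ofReal_cpow (div_pos Real.pi_pos hu).le]
  rw [mul_left_comm, ← Complex.exp_add]
  congr 2
  ring

lemma rpow_smul_fourier_exp_neg_mul_smul {u : ℝ} (hu : 0 < u) (v w ξ : V) (c c' : ℂ) :
    u ^ ((Module.finrank ℝ V + 3 : ℝ) / 2 - 1) •
        𝓕 (fun x : V ↦ Real.exp (-((‖x‖ ^ 2 + t ^ 2) * u)) • ((⟪x, v⟫ + c) * (⟪x, w⟫ + c'))) ξ =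
      (Real.pi ^ (Module.finrank ℝ V / 2 : ℝ) : ℝ) *
        (c * c' * besselKIntegrand (3 / 2) (t ^ 2) ((Real.pi * ‖ξ‖) ^ 2) u +
          (⟪v, w⟫ / 2 - Complex.I * Real.pi * (c * ⟪ξ, w⟫ + c' * ⟪ξ, v⟫)) *
            besselKIntegrand (1 / 2) (t ^ 2) ((Real.pi * ‖ξ‖) ^ 2) u -
          Real.pi ^ 2 * ⟪ξ, v⟫ * ⟪ξ, w⟫ *
            besselKIntegrand (-(1 / 2)) (t ^ 2) ((Real.pi * ‖ξ‖) ^ 2) u) := by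
  have hpow : u ^ ((Module.finrank ℝ V + 3 : ℝ) / 2 - 1) *
      (Real.pi / u) ^ (Module.finrank ℝ V / 2 : ℝ) =
        Real.pi ^ (Module.finrank ℝ V / 2 : ℝ) * √u := by
    rw [Real.div_rpow Real.pi_pos.le hu.le, Real.sqrt_eq_rpow, mul_div_left_comm,
      ← Real.rpow_sub hu]
    ring_nf
  have hthree : u ^ (3 / 2 - 1 : ℝ) = √u := by rw [Real.sqrt_eq_rpow]; norm_num
  have hone : u ^ (1 / 2 - 1 : ℝ) = √u / u := by rw [Real.sqrt_eq_rpow, Real.rpow_sub_one hu.ne']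
  have hneg : u ^ (-(1 / 2) - 1 : ℝ) = √u / u ^ 2 := by
    rw [Real.sqrt_eq_rpow, ← Real.rpow_two, ← Real.rpow_sub hu]; norm_num
  rw [fourier_exp_neg_mul_smul_inner_add_mul_inner_add hu, Complex.real_smul, mul_left_comm,
    ← Complex.ofReal_mul, ← mul_assoc (_ ^ _), hpow]
  simp only [besselKIntegrand, hthree, hone, hneg]
  push_cast
  field_simp
  ring_nf
  rw [Complex.I_sq]
  ring

lemma Gamma_smul_fourier_rpow_neg_smul_inner_add_mul_inner_add (ht : 0 < t) {ξ : V} (hξ : ξ ≠ 0)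
    (v w : V) (c c' : ℂ) :
    Real.Gamma ((Module.finrank ℝ V + 3 : ℝ) / 2) •
        𝓕 (fun x : V ↦ (‖x‖ ^ 2 + t ^ 2) ^ (-((Module.finrank ℝ V + 3 : ℝ) / 2)) •
          ((⟪x, v⟫ + c) * (⟪x, w⟫ + c'))) ξ =
      (Real.pi ^ ((Module.finrank ℝ V + 1 : ℝ) / 2) *
        Real.exp (-(2 * Real.pi * ‖ξ‖ * t)) : ℝ) *
        (c * c' * ((1 + 2 * Real.pi * ‖ξ‖ * t) / (2 * t ^ 3)) +
          (⟪v, w⟫ / 2 - Complex.I * Real.pi * (c * ⟪ξ, w⟫ + c' * ⟪ξ, v⟫)) / t -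
          Real.pi * ⟪ξ, v⟫ * ⟪ξ, w⟫ / ‖ξ‖) := by
  have hr : 0 < Real.pi * ‖ξ‖ := mul_pos Real.pi_pos (norm_pos_iff.2 hξ)
  have hInt (ν : ℝ) (a : ℂ) : IntegrableOn
      (fun u ↦ a * besselKIntegrand ν (t ^ 2) ((Real.pi * ‖ξ‖) ^ 2) u) (Ioi 0) :=
    (integrableOn_besselKIntegrand ν (sq_pos_of_pos ht) (sq_pos_of_pos hr)).ofReal.const_mul a
  have hpi : Real.pi ^ ((Module.finrank ℝ V + 1 : ℝ) / 2) =
      Real.pi ^ (Module.finrank ℝ V / 2 : ℝ) * √Real.pi := by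
    rw [add_div, Real.rpow_add Real.pi_pos, Real.sqrt_eq_rpow]
  rw [Gamma_smul_fourier_rpow_neg_smul (by positivity) (by fun_prop) (fun x ↦ by positivity)
    (integrable_rpow_neg_smul_inner_add_mul_inner_add ht (by linarith) v w c c'),
    setIntegral_congr_fun measurableSet_Ioi
      fun u hu ↦ rpow_smul_fourier_exp_neg_mul_smul hu v w ξ c c',
    integral_const_mul, integral_sub ((hInt _ _).fun_add (hInt _ _)) (hInt _ _),
    integral_add (hInt _ _) (hInt _ _)]
  simp only [integral_const_mul, integral_complex_ofReal]
  rw [← besselKIntegral, ← besselKIntegral, ← besselKIntegral, besselKIntegral_half ht hr,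
    besselKIntegral_neg_half ht hr, besselKIntegral_three_halves ht hr, hpi,
    show 2 * t * (Real.pi * ‖ξ‖) = 2 * Real.pi * ‖ξ‖ * t by ring]
  have : (‖ξ‖ : ℂ) ≠ 0 := mod_cast (norm_pos_iff.2 hξ).ne'
  have : (t : ℂ) ≠ 0 := mod_cast ht.ne'
  push_cast
  field_simp

theorem pKernel_fourier_transform_general (ht : 0 < t) {ξ : V} (hξ : ξ ≠ 0)
    (y z : WithLp 2 (V × ℝ)) :
    𝓕 (fun x ↦ (poissonTypeKernel t y z x : ℂ)) ξ =
      Real.exp (-(2 * Real.pi * ‖ξ‖ * t)) * (⟪y, z⟫ -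
        2 * Real.pi * ‖ξ‖ * t * poissonTypeCovector ξ y * poissonTypeCovector ξ z) := by
  have hΓ := Gamma_smul_fourier_rpow_neg_smul_inner_add_mul_inner_add ht hξ y.fst z.fst
    (t * y.snd : ℝ) (t * z.snd : ℝ)
  have hinner : (⟪y, z⟫ : ℂ) = ⟪y.fst, z.fst⟫ + y.snd * z.snd := by
    simp [WithLp.prod_inner_apply, mul_comm]
  have hpi : ((Real.pi ^ ((Module.finrank ℝ V + 1 : ℝ) / 2) : ℝ) : ℂ) ≠ 0 :=
    mod_cast (Real.rpow_pos_of_pos Real.pi_pos _).ne'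
  have hξ' : (‖ξ‖ : ℂ) ≠ 0 := mod_cast (norm_pos_iff.2 hξ).ne'
  have ht' : (t : ℂ) ≠ 0 := mod_cast ht.ne'
  rw [Complex.real_smul] at hΓ
  simp only [poissonTypeKernel_eq_rpow_neg_smul ht]
  rw [fourier_const_mul_apply, two_mul_div_sphereVol, mul_right_comm, Complex.ofReal_mul, mul_assoc,
    hΓ]
  simp only [poissonTypeCovector, hinner, Complex.ofReal_mul, Complex.ofReal_div,
    Complex.ofReal_ofNat]
  field_simp
  ring_nf
  rw [Complex.I_sq]
  ring

end PoissonTypeKernel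

section Coordinates

variable {d : ℕ}

/-- The standard basis of `ℝ^{d+1} = ℝ^d × ℝ`. -/
def snocBasis (d : ℕ) : Fin (d + 1) → WithLp 2 (Ed d × ℝ) :=
  Fin.snoc (fun i ↦ WithLp.toLp 2 (EuclideanSpace.single i 1, 0)) (WithLp.toLp 2 (0, 1))

lemma inner_snocBasis (x : Ed d) (t : ℝ) (j : Fin (d + 1)) :
    ⟪WithLp.toLp 2 (x, t), snocBasis d j⟫ = snocVec d x t j := by
  refine Fin.lastCases ?_ (fun i ↦ ?_) j <;>
    simp [snocBasis, snocVec, WithLp.prod_inner_apply, EuclideanSpace.inner_single_right]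

lemma inner_snocBasis_snocBasis (j k : Fin (d + 1)) :
    ⟪snocBasis d j, snocBasis d k⟫ = if j = k then 1 else 0 := by
  refine Fin.lastCases ?_ (fun i ↦ ?_) j <;> refine Fin.lastCases ?_ (fun i ↦ ?_) k <;>
    simp [snocBasis, WithLp.prod_inner_apply, EuclideanSpace.inner_single_right,
      (Fin.castSucc_ne_last _).symm, eq_comm]

lemma poissonTypeCovector_snocBasis (ξ : Ed d) (j : Fin (d + 1)) :
    poissonTypeCovector ξ (snocBasis d j) = wvec d ξ j := by
  refine Fin.lastCases ?_ (fun i ↦ ?_) j <;>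
    simp [snocBasis, wvec, poissonTypeCovector, EuclideanSpace.inner_single_right]

lemma poissonTypeKernel_snocBasis (t : ℝ) (j k : Fin (d + 1)) :
    poissonTypeKernel t (snocBasis d j) (snocBasis d k) = pEntry d t j k := by
  ext x
  simp only [poissonTypeKernel, pEntry, inner_snocBasis, finrank_euclideanSpace_fin]

lemma ftR_eq_fourier (g : Ed d → ℝ) (ξ : Ed d) : ftR d g ξ = 𝓕 (fun x ↦ (g x : ℂ)) ξ := by
  simp only [ftR, Real.fourier_eq', real_inner_comm ξ, smul_eq_mul]

end Coordinates

/-- **Fourier transform of the Poisson-type kernel.** For every `t > 0` and `ξ ≠ 0`,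
`ℱ(ℙ_t)(ξ) = e^{−2π|ξ|t} (I_{d+1} + (2π|ξ|t) M(ξ))` entrywise, where
`M(ξ)_{jk} = −w(ξ)_j w(ξ)_k` with `w(ξ) = (ξ/|ξ|, i)`; i.e. the upper-left `d×d` block of
`M(ξ)` is `−(ξ ⊗ ξ)/|ξ|²`, the first `d` entries of its last row and column are `−iξ/|ξ|`,
and its `(d+1,d+1)` entry is `1`. -/
theorem pKernel_fourier_transform (d : ℕ) (t : ℝ) (ht : 0 < t)
    (ξ : Ed d) (hξ : ξ ≠ 0) (j k : Fin (d + 1)) :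
    ftR d (pEntry d t j k) ξ =
      ((Real.exp (-(2 * Real.pi * ‖ξ‖ * t)) : ℝ) : ℂ) *
        ((if j = k then 1 else 0) -
          ((2 * Real.pi * ‖ξ‖ * t : ℝ) : ℂ) * wvec d ξ j * wvec d ξ k) := by
  rw [ftR_eq_fourier, ← poissonTypeKernel_snocBasis, pKernel_fourier_transform_general ht hξ,
    inner_snocBasis_snocBasis, poissonTypeCovector_snocBasis, poissonTypeCovector_snocBasis]
  push_cast [apply_ite Complex.ofReal]
  rfl
end
end

section
/- Semigroup property of the Poisson-type kernel: For all t₁, t₂ > 0, ℙ_{t₁} ∗ ℙ_{t₂} = ℙ_{t₁ + t₂}, where the convolution is taken in the sense of matrix multiplication, i.e. for every x ∈ ℝ^d and all j, k ∈ {1, …, d+1}, Σ_{ℓ=1}^{d+1} ∫_{ℝ^d} 𝔭_{t₁}^{jℓ}(y) 𝔭_{t₂}^{ℓk}(x − y) dy = 𝔭_{t₁+t₂}^{jk}(x). -/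
/-!
The identity `Γ(s) r⁻ˢ = ∫ v ^ (s - 1) exp (-r v) dv` writes `ℙ_t` as a mixture of Gaussians times
quadratic polynomials, and the mixture can be integrated in closed form on the Fourier side: the
transform of `ℙ_t` is the matrix `exp (-2πt|ξ|) (1 + (2πt / |ξ|) w wᵀ)` with `w = (-iξ, |ξ|)`. The
vector `w` is isotropic, `wᵀ w = 0`, so `(1 + a w wᵀ) (1 + b w wᵀ) = 1 + (a + b) w wᵀ` and these
matrices form a semigroup in `t`. Fourier inversion carries the semigroup law back to the kernels.
-/

open MeasureTheory Filter Set
open scoped ENNReal NNReal Topology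

noncomputable section

/-- The unnormalised density `v ^ s * exp (-(t² v + μ² / v))` on `v > 0` of the generalized inverse
Gaussian distribution, whose integrals `2 (μ / t) ^ (s + 1) K_{s + 1}(2 t μ)` are elementary for
half-integral `s`. -/
def gigDensity (t μ s v : ℝ) : ℝ := v ^ s * Real.exp (-(t ^ 2 * v + μ ^ 2 / v))

section GIG

variable {t μ s v : ℝ}

theorem measurable_gigDensity : Measurable (gigDensity t μ s) := by
  unfold gigDensity
  fun_prop

theorem gigDensity_nonneg (hv : 0 ≤ v) : 0 ≤ gigDensity t μ s v := by
  unfold gigDensity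
  positivity

theorem gigDensity_le (hv : 0 ≤ v) : gigDensity t μ s v ≤ v ^ s * Real.exp (-t ^ 2 * v) := by
  have : 0 ≤ μ ^ 2 / v := by positivity
  unfold gigDensity
  gcongr
  linarith

theorem gigDensity_zero_right (hs : s ≠ 0) : gigDensity t μ s 0 = 0 := by
  simp [gigDensity, Real.zero_rpow hs]

theorem gigDensity_zero_left : gigDensity t 0 s v = v ^ s * Real.exp (-(t ^ 2 * v)) := by
  simp [gigDensity]

theorem gigDensity_add_natCast (hv : 0 < v) (n : ℕ) :
    gigDensity t μ (s + n) v = v ^ n * gigDensity t μ s v := by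
  rw [gigDensity, gigDensity, Real.rpow_add_natCast hv.ne']
  ring

theorem integrableOn_gigDensity (ht : 0 < t) (hs : -1 < s) :
    IntegrableOn (gigDensity t μ s) (Ioi 0) := by
  have hdom := integrableOn_rpow_mul_exp_neg_mul_rpow hs one_pos (pow_pos ht 2)
  refine hdom.mono' measurable_gigDensity.aestronglyMeasurable ?_
  filter_upwards [ae_restrict_mem measurableSet_Ioi] with v (hv : 0 < v)
  rw [Real.norm_of_nonneg (gigDensity_nonneg hv.le), Real.rpow_one]
  exact gigDensity_le hv.le

theorem gigDensity_le_factorial_mul (hμ : 0 < μ) (hv : 0 < v) (n : ℕ) :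
    gigDensity t μ s v ≤ n.factorial / (μ ^ 2) ^ n * gigDensity t 0 (s + n) v := by
  have hexp : Real.exp (-(μ ^ 2 / v)) ≤ n.factorial / (μ ^ 2 / v) ^ n := by
    rw [Real.exp_neg, inv_le_comm₀ (by positivity) (by positivity), inv_div]
    exact Real.pow_div_factorial_le_exp _ (by positivity) n
  calc gigDensity t μ s v
      = gigDensity t 0 s v * Real.exp (-(μ ^ 2 / v)) := by
        rw [gigDensity_zero_left, gigDensity, neg_add, Real.exp_add, mul_assoc]
    _ ≤ gigDensity t 0 s v * (n.factorial / (μ ^ 2 / v) ^ n) := by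
        gcongr
        exact gigDensity_nonneg hv.le
    _ = n.factorial / (μ ^ 2) ^ n * gigDensity t 0 (s + n) v := by
        rw [gigDensity_add_natCast hv, div_pow]
        field_simp

theorem integrableOn_gigDensity_of_pos (ht : 0 < t) (hμ : 0 < μ) :
    IntegrableOn (gigDensity t μ s) (Ioi 0) := by
  obtain ⟨n, hn⟩ := exists_nat_gt (-1 - s)
  have hdom := (integrableOn_gigDensity (μ := 0) (s := s + n) ht (by linarith)).const_mul
    (n.factorial / (μ ^ 2) ^ n)
  refine hdom.mono' measurable_gigDensity.aestronglyMeasurable ?_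
  filter_upwards [ae_restrict_mem measurableSet_Ioi] with v (hv : 0 < v)
  rw [Real.norm_of_nonneg (gigDensity_nonneg hv.le)]
  exact gigDensity_le_factorial_mul hμ hv n

theorem gigDensity_inversion (ht : 0 < t) (hμ : 0 < μ) (hv : 0 < v) :
    v ^ (-2 : ℝ) * gigDensity t μ s ((μ / t) ^ 2 * v ^ (-1 : ℝ)) =
      (μ / t) ^ (2 * s) * gigDensity t μ (-s - 2) v := by
  have hpow : ((μ / t) ^ 2 * v ^ (-1 : ℝ)) ^ s = (μ / t) ^ (2 * s) * v ^ (-s) := by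
    rw [Real.mul_rpow (by positivity) (by positivity), ← Real.rpow_mul hv.le, ← Real.rpow_natCast,
      ← Real.rpow_mul (by positivity)]
    norm_num
  have hexp : t ^ 2 * ((μ / t) ^ 2 * v⁻¹) + μ ^ 2 / ((μ / t) ^ 2 * v⁻¹) =
      t ^ 2 * v + μ ^ 2 / v := by
    field_simp
    ring
  rw [gigDensity, gigDensity, hpow, Real.rpow_neg_one, hexp, sub_eq_add_neg, Real.rpow_add hv]
  ring

theorem integral_gigDensity_inversion (ht : 0 < t) (hμ : 0 < μ) :
    ∫ v in Ioi 0, gigDensity t μ s v =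
      (μ / t) ^ (2 * (s + 1)) * ∫ v in Ioi 0, gigDensity t μ (-s - 2) v := by
  have hscale := integral_comp_mul_left_Ioi (gigDensity t μ s) 0 (b := (μ / t) ^ 2) (by positivity)
  have hinv := integral_comp_rpow_Ioi (fun v ↦ gigDensity t μ s ((μ / t) ^ 2 * v)) (p := -1)
    (by norm_num)
  have hcongr : ∀ v ∈ Ioi (0 : ℝ), (|(-1 : ℝ)| * v ^ ((-1 : ℝ) - 1)) •
      gigDensity t μ s ((μ / t) ^ 2 * v ^ (-1 : ℝ)) =
        (μ / t) ^ (2 * s) * gigDensity t μ (-s - 2) v := by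
    intro v hv
    rw [← gigDensity_inversion ht hμ hv]
    norm_num
  rw [setIntegral_congr_fun measurableSet_Ioi hcongr, integral_const_mul, hscale, mul_zero,
    smul_eq_mul, eq_inv_mul_iff_mul_eq₀ (by positivity)] at hinv
  rw [← hinv, mul_add, Real.rpow_add (by positivity), mul_one, Real.rpow_two]
  ring

/-- The Cauchy–Schlömilch substitution `v ↦ t √v - μ / √v`, which maps `(0, ∞)` onto `ℝ` and turns
the Gaussian `exp (-y ^ 2)` into a multiple of `exp (-(t² v + μ² / v))`. -/
def cauchySchlomilch (t μ v : ℝ) : ℝ := t * √v - μ / √v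

theorem strictMonoOn_cauchySchlomilch (ht : 0 < t) (hμ : 0 ≤ μ) :
    StrictMonoOn (cauchySchlomilch t μ) (Ioi 0) := by
  intro v (hv : 0 < v) w _ hvw
  have hsqrt : √v < √w := Real.sqrt_lt_sqrt hv.le hvw
  have : 0 < √v := Real.sqrt_pos.2 hv
  have hmul : t * √v < t * √w := by gcongr
  have hdiv : μ / √w ≤ μ / √v := by gcongr
  unfold cauchySchlomilch
  linarith

theorem image_cauchySchlomilch (ht : 0 < t) (hμ : 0 < μ) :
    cauchySchlomilch t μ '' Ioi 0 = univ := by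
  refine eq_univ_of_forall fun y ↦ ?_
  -- `√v` is the positive root of `t r² - y r - μ = 0`.
  set Δ := y ^ 2 + 4 * t * μ
  have hΔ : √Δ ^ 2 = Δ := Real.sq_sqrt (by positivity)
  have hlt : |y| < √Δ := by
    rw [← Real.sqrt_sq_eq_abs]
    exact Real.sqrt_lt_sqrt (sq_nonneg y) (lt_add_of_pos_right _ (by positivity))
  have hpos : 0 < y + √Δ := by linarith [neg_abs_le y]
  refine ⟨((y + √Δ) / (2 * t)) ^ 2, mem_Ioi.2 (by positivity), ?_⟩
  rw [cauchySchlomilch, Real.sqrt_sq (by positivity)]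
  field_simp
  linear_combination hΔ

theorem hasDerivAt_cauchySchlomilch (hv : 0 < v) :
    HasDerivAt (cauchySchlomilch t μ)
      (t / 2 * v ^ (-1 / 2 : ℝ) + μ / 2 * v ^ (-3 / 2 : ℝ)) v := by
  have hpos := (Real.hasDerivAt_rpow_const (p := 1 / 2) (Or.inl hv.ne')).const_mul t
  have hneg := (Real.hasDerivAt_rpow_const (p := -1 / 2) (Or.inl hv.ne')).const_mul μ
  refine ((hpos.sub hneg).congr_deriv ?_).congr_of_eventuallyEq ?_
  · have hpos_exp : (1 / 2 - 1 : ℝ) = -1 / 2 := by norm_num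
    have hneg_exp : (-1 / 2 - 1 : ℝ) = -3 / 2 := by norm_num
    rw [hpos_exp, hneg_exp]
    ring
  · filter_upwards [lt_mem_nhds hv] with w hw
    simp only [cauchySchlomilch, Pi.sub_apply, Real.sqrt_eq_rpow, div_eq_mul_inv μ]
    rw [← Real.rpow_neg hw.le, neg_div]

theorem exp_neg_cauchySchlomilch_sq (hv : 0 < v) :
    Real.exp (-cauchySchlomilch t μ v ^ 2) =
      Real.exp (2 * t * μ) * Real.exp (-(t ^ 2 * v + μ ^ 2 / v)) := by
  have hsq : √v ^ 2 = v := Real.sq_sqrt hv.le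
  have hne : √v ≠ 0 := (Real.sqrt_pos.2 hv).ne'
  rw [← Real.exp_add, cauchySchlomilch]
  congr 1
  nth_rewrite 3 4 [← hsq]
  field_simp
  ring

theorem integral_gigDensity_cauchySchlomilch (ht : 0 < t) (hμ : 0 < μ) :
    t * (∫ v in Ioi 0, gigDensity t μ (-1 / 2) v) + μ * (∫ v in Ioi 0, gigDensity t μ (-3 / 2) v) =
      2 * √Real.pi * Real.exp (-(2 * t * μ)) := by
  have hsub := integral_image_eq_integral_abs_deriv_smul measurableSet_Ioi
    (fun v hv ↦ (hasDerivAt_cauchySchlomilch (t := t) (μ := μ) hv).hasDerivWithinAt)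
    (strictMonoOn_cauchySchlomilch ht hμ.le).injOn (fun y ↦ Real.exp (-y ^ 2))
  have hgauss : ∫ y : ℝ, Real.exp (-y ^ 2) = √Real.pi := by simpa using integral_gaussian 1
  have hcongr : ∀ v ∈ Ioi (0 : ℝ), |t / 2 * v ^ (-1 / 2 : ℝ) + μ / 2 * v ^ (-3 / 2 : ℝ)| •
      Real.exp (-cauchySchlomilch t μ v ^ 2) = Real.exp (2 * t * μ) / 2 *
        (t * gigDensity t μ (-1 / 2) v + μ * gigDensity t μ (-3 / 2) v) := by
    intro v (hv : 0 < v)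
    rw [abs_of_pos (by positivity), exp_neg_cauchySchlomilch_sq hv, gigDensity, gigDensity,
      smul_eq_mul]
    ring
  rw [image_cauchySchlomilch ht hμ, setIntegral_univ, hgauss,
    setIntegral_congr_fun measurableSet_Ioi hcongr, integral_const_mul,
    integral_add ((integrableOn_gigDensity_of_pos ht hμ).const_mul t)
      ((integrableOn_gigDensity_of_pos ht hμ).const_mul μ),
    integral_const_mul, integral_const_mul] at hsub
  rw [hsub, Real.exp_neg]
  field_simp

theorem integral_gigDensity_neg_one_half_eq_mul (ht : 0 < t) (hμ : 0 < μ) :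
    ∫ v in Ioi 0, gigDensity t μ (-1 / 2) v = μ / t * ∫ v in Ioi 0, gigDensity t μ (-3 / 2) v := by
  have hexp : (-(-1 / 2) - 2 : ℝ) = -3 / 2 := by norm_num
  have hfactor : (2 * (-1 / 2 + 1) : ℝ) = 1 := by norm_num
  rw [integral_gigDensity_inversion ht hμ, hexp, hfactor, Real.rpow_one]

theorem integral_gigDensity_neg_three_halves (ht : 0 < t) (hμ : 0 < μ) :
    ∫ v in Ioi 0, gigDensity t μ (-3 / 2) v = √Real.pi * Real.exp (-(2 * t * μ)) / μ := by
  have hsum := integral_gigDensity_cauchySchlomilch ht hμ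
  rw [integral_gigDensity_neg_one_half_eq_mul ht hμ] at hsum
  field_simp at hsum ⊢
  linarith

theorem integral_gigDensity_zero_left (ht : 0 < t) (hs : -1 < s) :
    ∫ v in Ioi 0, gigDensity t 0 s v = Real.Gamma (s + 1) / t ^ (2 * (s + 1)) := by
  have h := Real.integral_rpow_mul_exp_neg_mul_Ioi (a := s + 1) (by linarith) (pow_pos ht 2)
  simp only [add_sub_cancel_right] at h
  simp only [gigDensity_zero_left, h]
  rw [one_div, Real.inv_rpow (by positivity), Real.rpow_mul ht.le, Real.rpow_two]
  ring

theorem integral_gigDensity_neg_one_half (ht : 0 < t) (hμ : 0 ≤ μ) :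
    ∫ v in Ioi 0, gigDensity t μ (-1 / 2) v = √Real.pi * Real.exp (-(2 * t * μ)) / t := by
  obtain rfl | hμ := hμ.eq_or_lt
  · have h := integral_gigDensity_zero_left (s := -1 / 2) ht (by norm_num)
    have hhalf : (-1 / 2 + 1 : ℝ) = 1 / 2 := by norm_num
    rw [hhalf, Real.Gamma_one_half_eq, mul_one_div_cancel two_ne_zero, Real.rpow_one] at h
    rw [h, mul_zero, neg_zero, Real.exp_zero, mul_one]
  · rw [integral_gigDensity_neg_one_half_eq_mul ht hμ, integral_gigDensity_neg_three_halves ht hμ]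
    field_simp

theorem hasDerivAt_gigDensity (hv : 0 < v) :
    HasDerivAt (gigDensity t μ s) (s * gigDensity t μ (s - 1) v - t ^ 2 * gigDensity t μ s v +
      μ ^ 2 * gigDensity t μ (s - 2) v) v := by
  have hpow := Real.hasDerivAt_rpow_const (x := v) (p := s) (Or.inl hv.ne')
  have hexp := (((hasDerivAt_id v).const_mul (t ^ 2)).add
    ((hasDerivAt_inv hv.ne').const_mul (μ ^ 2))).neg.exp
  refine (hpow.mul hexp).congr_deriv ?_
  have hsub : v ^ (s - 2) = v ^ s / v ^ 2 := by rw [Real.rpow_sub hv, Real.rpow_two]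
  simp only [gigDensity, hsub, id, Pi.neg_apply, Pi.add_apply, ← div_eq_mul_inv]
  ring

theorem tendsto_gigDensity_zero (hs : 0 < s) :
    Tendsto (gigDensity t μ s) (𝓝[≥] 0) (𝓝 0) := by
  have hpow : Tendsto (fun v : ℝ ↦ v ^ s * Real.exp (-t ^ 2 * v)) (𝓝[≥] 0) (𝓝 0) := by
    have hcont : Continuous fun v : ℝ ↦ v ^ s * Real.exp (-t ^ 2 * v) :=
      (Real.continuous_rpow_const hs.le).mul (by fun_prop)
    simpa [Real.zero_rpow hs.ne'] using (hcont.tendsto 0).mono_left nhdsWithin_le_nhds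
  refine squeeze_zero' ?_ ?_ hpow
  · filter_upwards [self_mem_nhdsWithin] with v hv using gigDensity_nonneg hv
  · filter_upwards [self_mem_nhdsWithin] with v hv using gigDensity_le hv

theorem tendsto_gigDensity_atTop (ht : 0 < t) : Tendsto (gigDensity t μ s) atTop (𝓝 0) := by
  refine squeeze_zero' ?_ ?_
    (tendsto_rpow_mul_exp_neg_mul_atTop_nhds_zero s (t ^ 2) (by positivity))
  · filter_upwards [eventually_ge_atTop 0] with v hv using gigDensity_nonneg hv
  · filter_upwards [eventually_ge_atTop 0] with v hv using gigDensity_le hv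

theorem integral_gigDensity_recurrence (ht : 0 < t) (hμ : 0 < μ) (hs : 0 < s) :
    t ^ 2 * ∫ v in Ioi 0, gigDensity t μ s v =
      s * (∫ v in Ioi 0, gigDensity t μ (s - 1) v) +
        μ ^ 2 * ∫ v in Ioi 0, gigDensity t μ (s - 2) v := by
  have hint (s : ℝ) := integrableOn_gigDensity_of_pos (s := s) ht hμ
  have hint' : IntegrableOn (fun v ↦ s * gigDensity t μ (s - 1) v - t ^ 2 * gigDensity t μ s v)
      (Ioi 0) := ((hint _).const_mul s).sub ((hint _).const_mul (t ^ 2))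
  have hcont : ContinuousWithinAt (gigDensity t μ s) (Ici 0) 0 := by
    simpa [ContinuousWithinAt, gigDensity_zero_right hs.ne'] using tendsto_gigDensity_zero hs
  have hparts := integral_Ioi_of_hasDerivAt_of_tendsto hcont (fun v hv ↦ hasDerivAt_gigDensity hv)
    (hint'.add ((hint _).const_mul (μ ^ 2))) (tendsto_gigDensity_atTop ht)
  rw [integral_add hint' ((hint _).const_mul (μ ^ 2)), integral_sub ((hint _).const_mul s)
    ((hint _).const_mul (t ^ 2)), integral_const_mul, integral_const_mul, integral_const_mul,
    gigDensity_zero_right hs.ne'] at hparts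
  linarith

theorem integral_gigDensity_one_half (ht : 0 < t) (hμ : 0 ≤ μ) :
    ∫ v in Ioi 0, gigDensity t μ (1 / 2) v =
      √Real.pi * Real.exp (-(2 * t * μ)) * (1 / (2 * t ^ 3) + μ / t ^ 2) := by
  obtain rfl | hμ := hμ.eq_or_lt
  · have hΓ : Real.Gamma (1 / 2 + 1) = √Real.pi / 2 := by
      rw [Real.Gamma_add_one (by norm_num), Real.Gamma_one_half_eq]
      ring
    have hpow : t ^ (2 * (1 / 2 + 1) : ℝ) = t ^ 3 := by
      rw [← Real.rpow_natCast]
      norm_num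
    rw [integral_gigDensity_zero_left ht (by norm_num), hΓ, hpow]
    simp only [mul_zero, neg_zero, Real.exp_zero, mul_one, zero_div, add_zero]
    ring
  · have hrec := integral_gigDensity_recurrence (s := 1 / 2) ht hμ (by norm_num)
    have hfirst : (1 / 2 - 1 : ℝ) = -1 / 2 := by norm_num
    have hsecond : (1 / 2 - 2 : ℝ) = -3 / 2 := by norm_num
    rw [hfirst, hsecond, integral_gigDensity_neg_one_half ht hμ.le,
      integral_gigDensity_neg_three_halves ht hμ] at hrec
    field_simp at hrec ⊢
    linarith

theorem laurent_mul_gigDensity (hv : 0 < v) (c₀ c₁ c₂ : ℂ) :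
    (c₀ + c₁ / v + c₂ / v ^ 2) * gigDensity t μ (1 / 2) v =
      c₀ * gigDensity t μ (1 / 2) v + c₁ * gigDensity t μ (-1 / 2) v +
        c₂ * gigDensity t μ (-3 / 2) v := by
  have hexp₁ : (1 / 2 : ℝ) = -1 / 2 + (1 : ℕ) := by norm_num
  have hexp₂ : (1 / 2 : ℝ) = -3 / 2 + (2 : ℕ) := by norm_num
  have hshift₁ : gigDensity t μ (1 / 2) v = v ^ 1 * gigDensity t μ (-1 / 2) v := by
    rw [hexp₁, gigDensity_add_natCast hv]
  have hshift₂ : gigDensity t μ (1 / 2) v = v ^ 2 * gigDensity t μ (-3 / 2) v := by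
    rw [hexp₂, gigDensity_add_natCast hv]
  have hne : (v : ℂ) ≠ 0 := by exact_mod_cast hv.ne'
  rw [add_mul, add_mul]
  congr 1
  · rw [hshift₁]
    push_cast
    field_simp
  · rw [hshift₂]
    push_cast
    field_simp

theorem integral_laurent_mul_gigDensity (ht : 0 < t) (hμ : 0 ≤ μ) (c₀ c₁ c₂ : ℂ)
    (hc₂ : μ = 0 → c₂ = 0) :
    ∫ v in Ioi 0, (c₀ + c₁ / v + c₂ / v ^ 2) * gigDensity t μ (1 / 2) v =
      √Real.pi * Real.exp (-(2 * t * μ)) *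
        (c₀ * (1 / (2 * t ^ 3) + μ / t ^ 2) + c₁ / t + c₂ / μ) := by
  have hint₀ : IntegrableOn (fun v ↦ c₀ * (gigDensity t μ (1 / 2) v : ℂ)) (Ioi 0) :=
    (integrableOn_gigDensity ht (by norm_num)).ofReal.const_mul c₀
  have hint₁ : IntegrableOn (fun v ↦ c₁ * (gigDensity t μ (-1 / 2) v : ℂ)) (Ioi 0) :=
    (integrableOn_gigDensity ht (by norm_num)).ofReal.const_mul c₁
  have hint₀₁ : IntegrableOn (fun v ↦ c₀ * (gigDensity t μ (1 / 2) v : ℂ) +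
      c₁ * gigDensity t μ (-1 / 2) v) (Ioi 0) := hint₀.add hint₁
  obtain ⟨hint₂, hval₂⟩ : IntegrableOn (fun v ↦ c₂ * (gigDensity t μ (-3 / 2) v : ℂ)) (Ioi 0) ∧
      c₂ * ∫ v in Ioi 0, (gigDensity t μ (-3 / 2) v : ℂ) =
        √Real.pi * Real.exp (-(2 * t * μ)) * (c₂ / μ) := by
    obtain rfl | hμ := hμ.eq_or_lt
    · simp [hc₂ rfl]
    · refine ⟨(integrableOn_gigDensity_of_pos ht hμ).ofReal.const_mul c₂, ?_⟩
      rw [integral_complex_ofReal, integral_gigDensity_neg_three_halves ht hμ]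
      push_cast
      ring
  rw [setIntegral_congr_fun measurableSet_Ioi fun v hv ↦ laurent_mul_gigDensity hv c₀ c₁ c₂,
    integral_add hint₀₁ hint₂, integral_add hint₀ hint₁, integral_const_mul, integral_const_mul,
    integral_const_mul, hval₂, integral_complex_ofReal, integral_complex_ofReal,
    integral_gigDensity_neg_one_half ht hμ, integral_gigDensity_one_half ht hμ]
  push_cast
  ring

end GIG

theorem one_add_pow_le_mul_exp {c r : ℝ} (hc : 0 < c) (hr : 0 ≤ r) (n : ℕ) :
    (1 + r) ^ n ≤ n.factorial / c ^ n * Real.exp (c * (1 + r)) := by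
  have h := Real.pow_div_factorial_le_exp (c * (1 + r)) (by positivity) n
  rw [mul_pow, div_le_iff₀ (by positivity)] at h
  rw [div_mul_eq_mul_div, le_div_iff₀ (by positivity)]
  linarith

section Gaussian

variable {V : Type*} [NormedAddCommGroup V] [InnerProductSpace ℝ V]

/-- The Gaussian `exp (-b ‖x‖² + c ⟪w, x⟫)` with complex parameters; for `c = -2πi` it is the
integrand of the Fourier transform at `w` of `exp (-b ‖x‖²)`. -/
def complexGaussian (b c : ℂ) (w x : V) : ℂ := Complex.exp (-b * ‖x‖ ^ 2 + c * inner ℝ w x)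

variable {b : ℂ} (c : ℂ) (w : V)

theorem differentiable_complexGaussian : Differentiable ℝ (complexGaussian b c w) := by
  have hnorm : Differentiable ℝ fun x : V ↦ ((‖x‖ : ℂ) ^ 2) := by
    have hreal : Differentiable ℝ fun x : V ↦ ‖x‖ ^ 2 :=
      (contDiff_norm_sq ℝ (n := 1)).differentiable one_ne_zero
    exact_mod_cast Complex.ofRealCLM.differentiable.comp hreal
  have hinner : Differentiable ℝ fun x : V ↦ ((inner ℝ w x : ℝ) : ℂ) :=
    Complex.ofRealCLM.differentiable.comp (innerSL ℝ w).differentiable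
  unfold complexGaussian
  fun_prop

theorem fderiv_complexGaussian_apply (x a : V) :
    fderiv ℝ (complexGaussian b c w) x a =
      (-(2 * b * inner ℝ a x) + c * inner ℝ a w) * complexGaussian b c w x := by
  have hnorm : HasFDerivAt (fun y : V ↦ ((‖y‖ : ℂ) ^ 2))
      (Complex.ofRealCLM.comp (2 • innerSL ℝ x)) x := by
    exact_mod_cast Complex.ofRealCLM.hasFDerivAt.comp x (hasStrictFDerivAt_norm_sq x).hasFDerivAt
  have hinner := Complex.ofRealCLM.hasFDerivAt.comp x (innerSL ℝ w).hasFDerivAt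
  have hderiv : HasFDerivAt (complexGaussian b c w) _ x :=
    ((hnorm.const_mul (-b)).add (hinner.const_mul c)).cexp
  rw [hderiv.fderiv]
  simp only [neg_mul, coe_innerSL_apply, Function.comp_apply, Complex.ofRealCLM_apply,
    Pi.add_apply, ContinuousLinearMap.comp_smul, smul_add, add_apply, smul_apply,
    ContinuousLinearMap.comp_apply, nsmul_eq_mul, Nat.cast_ofNat, smul_eq_mul, mul_neg,
    real_inner_comm, complexGaussian]
  ring

variable [FiniteDimensional ℝ V] [MeasurableSpace V] [BorelSpace V]

theorem integrable_mul_complexGaussian (hb : 0 < b.re) {g : V → ℂ}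
    (hg : g.HasTemperateGrowth) : Integrable fun x ↦ g x * complexGaussian b c w x := by
  obtain ⟨n, C, hC, hbound⟩ := hg.norm_iteratedFDeriv_le_uniform 0
  have hε : 0 < b.re / 2 := half_pos hb
  set ε := b.re / 2 with hε_def
  have hb' : 0 < (b - ε).re := by simp [hε_def, hb]
  have hpow (x : V) : (1 + ‖x‖) ^ n ≤
      2 ^ n * (n.factorial / ε ^ n * Real.exp (ε * (1 + ‖x‖ ^ 2))) :=
    calc (1 + ‖x‖) ^ n ≤ (2 * (1 + ‖x‖ ^ 2)) ^ n := by
          gcongr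
          nlinarith [sq_nonneg (‖x‖ - 1)]
      _ ≤ _ := by
          rw [mul_pow]
          gcongr
          exact one_add_pow_le_mul_exp hε (sq_nonneg _) n
  have hdom := ((GaussianFourier.integrable_cexp_neg_mul_sq_norm_add hb' c w).norm.const_mul
    (C * (2 ^ n * (n.factorial / ε ^ n * Real.exp ε))))
  refine hdom.mono' ?_ (ae_of_all _ fun x ↦ ?_)
  · exact (hg.1.continuous.mul (differentiable_complexGaussian c w).continuous).aestronglyMeasurable
  · have hgx : ‖g x‖ ≤ C * (1 + ‖x‖) ^ n := by simpa using hbound 0 le_rfl x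
    have hsplit : Real.exp (ε * (1 + ‖x‖ ^ 2)) * ‖complexGaussian b c w x‖ =
        Real.exp ε * ‖Complex.exp (-(b - ε) * ‖x‖ ^ 2 + c * inner ℝ w x)‖ := by
      rw [complexGaussian, Complex.norm_exp, Complex.norm_exp, ← Real.exp_add, ← Real.exp_add]
      congr 1
      simp only [← Complex.ofReal_pow, Complex.add_re, Complex.neg_re, Complex.mul_re,
        Complex.ofReal_re, Complex.ofReal_im, mul_zero, sub_zero, Complex.sub_re]
      ring
    calc ‖g x * complexGaussian b c w x‖
        ≤ C * (2 ^ n * (n.factorial / ε ^ n * Real.exp (ε * (1 + ‖x‖ ^ 2)))) *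
            ‖complexGaussian b c w x‖ := by
          rw [norm_mul]
          gcongr
          exact hgx.trans (mul_le_mul_of_nonneg_left (hpow x) hC)
      _ = _ := by
          linear_combination (C * (2 ^ n * (n.factorial / ε ^ n))) * hsplit

/-- Stein's lemma (Gaussian integration by parts). -/
theorem integral_inner_mul_mul_complexGaussian (hb : 0 < b.re) {g g' : V → ℂ} {a : V}
    (hg : g.HasTemperateGrowth) (hg' : g'.HasTemperateGrowth)
    (hderiv : ∀ x, fderiv ℝ g x a = g' x) :
    ∫ x, (inner ℝ a x : ℂ) * g x * complexGaussian b c w x =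
      c * inner ℝ a w / (2 * b) * (∫ x, g x * complexGaussian b c w x) +
        1 / (2 * b) * ∫ x, g' x * complexGaussian b c w x := by
  have hb0 : b ≠ 0 := by
    rintro rfl
    simp at hb
  have hint_g := integrable_mul_complexGaussian c w hb hg
  have hint_g' := integrable_mul_complexGaussian c w hb hg'
  have hint_inner : Integrable fun x ↦ (inner ℝ a x : ℂ) * g x * complexGaussian b c w x :=
    integrable_mul_complexGaussian c w hb (by fun_prop)
  have hfderiv (x : V) : g x * fderiv ℝ (complexGaussian b c w) x a =
      c * inner ℝ a w * (g x * complexGaussian b c w x) -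
        2 * b * (inner ℝ a x * g x * complexGaussian b c w x) := by
    rw [fderiv_complexGaussian_apply]
    ring
  have hparts := integral_mul_fderiv_eq_neg_fderiv_mul_of_integrable (μ := volume)
    (f := g) (g := complexGaussian b c w) (v := a) (by simpa only [hderiv] using hint_g')
    (by simpa only [hfderiv, Pi.sub_def] using
      (hint_g.const_mul (c * inner ℝ a w)).sub (hint_inner.const_mul (2 * b))) hint_g
    (fun x _ ↦ hg.1.differentiable (by simp) x) (fun x _ ↦ differentiable_complexGaussian c w x)
  simp only [hfderiv, hderiv] at hparts
  rw [integral_sub (hint_g.const_mul _) (hint_inner.const_mul _), integral_const_mul,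
    integral_const_mul] at hparts
  field_simp
  linear_combination -hparts

theorem integral_affine_mul_complexGaussian (hb : 0 < b.re) (a : V) (s : ℂ) :
    ∫ x, ((inner ℝ a x : ℂ) + s) * complexGaussian b c w x =
      (c * inner ℝ a w / (2 * b) + s) * ∫ x, complexGaussian b c w x := by
  have hstein := integral_inner_mul_mul_complexGaussian c w (a := a) (g := fun _ ↦ 1)
    (g' := fun _ ↦ 0) hb (by fun_prop) (by fun_prop) (by simp)
  have hint_inner := integrable_mul_complexGaussian c w hb
    (g := fun x ↦ (inner ℝ a x : ℂ)) (by fun_prop)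
  have hint_const := integrable_mul_complexGaussian c w hb (g := fun _ ↦ s) (by fun_prop)
  simp only [mul_one, one_mul, zero_mul, integral_zero, mul_zero, add_zero] at hstein
  simp only [add_mul]
  rw [integral_add hint_inner hint_const, integral_const_mul, hstein]

theorem integral_affine_mul_affine_mul_complexGaussian (hb : 0 < b.re) (a a' : V) (s s' : ℂ) :
    ∫ x, ((inner ℝ a x : ℂ) + s) * ((inner ℝ a' x : ℂ) + s') * complexGaussian b c w x =
      ((c * inner ℝ a w / (2 * b) + s) * (c * inner ℝ a' w / (2 * b) + s') +
        inner ℝ a a' / (2 * b)) * ∫ x, complexGaussian b c w x := by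
  have hderiv (x : V) : fderiv ℝ (fun x : V ↦ (inner ℝ a' x : ℂ) + s') x a = inner ℝ a a' := by
    have h := (Complex.ofRealCLM.hasFDerivAt.comp x (innerSL ℝ a').hasFDerivAt).add_const s'
    exact (DFunLike.congr_fun h.fderiv a).trans (by simp [real_inner_comm])
  have hstein := integral_inner_mul_mul_complexGaussian c w (a := a)
    (g := fun x ↦ (inner ℝ a' x : ℂ) + s') hb (by fun_prop) (by fun_prop) hderiv
  have hint_inner := integrable_mul_complexGaussian c w hb
    (g := fun x ↦ (inner ℝ a x : ℂ) * ((inner ℝ a' x : ℂ) + s')) (by fun_prop)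
  have hint_const := integrable_mul_complexGaussian c w hb
    (g := fun x ↦ s * ((inner ℝ a' x : ℂ) + s')) (by fun_prop)
  have haffine := integral_affine_mul_complexGaussian c w hb a' s'
  simp only [mul_assoc] at hstein hint_inner hint_const ⊢
  simp only [add_mul _ _ (_ * _)]
  rw [integral_add hint_inner hint_const, hstein, integral_const_mul, integral_const_mul, haffine]
  ring

end Gaussian

theorem integral_rpow_mul_exp_neg_mul_Ioi_mul {s r : ℝ} (hs : 0 < s) (hr : 0 < r) (z : ℂ) :
    ∫ v in Ioi (0 : ℝ), (v ^ (s - 1) * Real.exp (-(r * v)) : ℝ) * z =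
      Real.Gamma s * (z / (r ^ s : ℝ)) := by
  rw [integral_mul_const, integral_complex_ofReal, Real.integral_rpow_mul_exp_neg_mul_Ioi hs hr,
    one_div, Real.inv_rpow hr.le]
  push_cast
  ring

theorem integral_norm_rpow_mul_exp_neg_mul_Ioi_mul {s r : ℝ} (hs : 0 < s) (hr : 0 < r) (z : ℂ) :
    ∫ v in Ioi (0 : ℝ), ‖((v ^ (s - 1) * Real.exp (-(r * v)) : ℝ) : ℂ) * z‖ =
      Real.Gamma s * ‖z / (r ^ s : ℝ)‖ := by
  have hcongr : ∀ v ∈ Ioi (0 : ℝ), ‖((v ^ (s - 1) * Real.exp (-(r * v)) : ℝ) : ℂ) * z‖ =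
      v ^ (s - 1) * Real.exp (-(r * v)) * ‖z‖ := by
    intro v (hv : 0 < v)
    rw [norm_mul, Complex.norm_of_nonneg (by positivity)]
  rw [setIntegral_congr_fun measurableSet_Ioi hcongr, integral_mul_const,
    Real.integral_rpow_mul_exp_neg_mul_Ioi hs hr, norm_div,
    Complex.norm_of_nonneg (Real.rpow_nonneg hr.le s), one_div, Real.inv_rpow hr.le]
  ring

section Subordination

variable {X : Type*} [MeasurableSpace X] {μ : Measure X} {s : ℝ} {r : X → ℝ} {F : X → ℂ}

theorem integrable_prod_rpow_mul_exp_neg_mul (hs : 0 < s) (hr : ∀ x, 0 < r x)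
    (hr_meas : Measurable r) (hF : Integrable (fun x ↦ F x / (r x ^ s : ℝ)) μ) :
    Integrable (fun p : X × ℝ ↦ ((p.2 ^ (s - 1) * Real.exp (-(r p.1 * p.2)) : ℝ) : ℂ) * F p.1)
      (μ.prod (volume.restrict (Ioi 0))) := by
  have hF_meas : AEStronglyMeasurable F μ := by
    have hrpow : Measurable fun x ↦ ((r x ^ s : ℝ) : ℂ) := by fun_prop
    refine (hF.aestronglyMeasurable.mul hrpow.aestronglyMeasurable).congr (ae_of_all _ fun x ↦ ?_)
    have : ((r x ^ s : ℝ) : ℂ) ≠ 0 := by exact_mod_cast (Real.rpow_pos_of_pos (hr x) s).ne'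
    exact div_mul_cancel₀ _ this
  have hdensity_meas :
      Measurable fun p : X × ℝ ↦ ((p.2 ^ (s - 1) * Real.exp (-(r p.1 * p.2)) : ℝ) : ℂ) := by
    fun_prop
  have hint (x : X) : IntegrableOn (fun v : ℝ ↦ v ^ (s - 1) * Real.exp (-(r x * v))) (Ioi 0) := by
    simpa using integrableOn_rpow_mul_exp_neg_mul_rpow (s := s - 1) (by linarith) one_pos (hr x)
  refine (integrable_prod_iff (hdensity_meas.aestronglyMeasurable.mul hF_meas.comp_fst)).2
    ⟨ae_of_all _ fun x ↦ (hint x).ofReal.mul_const (F x), ?_⟩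
  simpa only [Pi.mul_apply, integral_norm_rpow_mul_exp_neg_mul_Ioi_mul hs (hr _)] using
    hF.norm.const_mul (Real.Gamma s)

/-- Subordination: the identity `Γ(s) r⁻ˢ = ∫ v ^ (s - 1) exp (-r v) dv` under the integral sign. -/
theorem Gamma_mul_integral_div_rpow [SFinite μ] (hs : 0 < s) (hr : ∀ x, 0 < r x)
    (hr_meas : Measurable r) (hF : Integrable (fun x ↦ F x / (r x ^ s : ℝ)) μ) :
    Real.Gamma s * ∫ x, F x / (r x ^ s : ℝ) ∂μ =
      ∫ v in Ioi (0 : ℝ), (v ^ (s - 1) : ℝ) * ∫ x, Real.exp (-(r x * v)) * F x ∂μ := by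
  calc Real.Gamma s * ∫ x, F x / (r x ^ s : ℝ) ∂μ
      = ∫ x, (∫ v in Ioi (0 : ℝ), (v ^ (s - 1) * Real.exp (-(r x * v)) : ℝ) * F x) ∂μ := by
        rw [← integral_const_mul]
        simp only [integral_rpow_mul_exp_neg_mul_Ioi_mul hs (hr _)]
    _ = ∫ v in Ioi (0 : ℝ), ∫ x, (v ^ (s - 1) * Real.exp (-(r x * v)) : ℝ) * F x ∂μ :=
        integral_integral_swap (integrable_prod_rpow_mul_exp_neg_mul hs hr hr_meas hF)
    _ = ∫ v in Ioi (0 : ℝ), (v ^ (s - 1) : ℝ) * ∫ x, Real.exp (-(r x * v)) * F x ∂μ := by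
        simp only [← integral_const_mul, Complex.ofReal_mul, mul_assoc]

end Subordination

section FourierTransform

variable {V : Type*} [NormedAddCommGroup V] [InnerProductSpace ℝ V]

/-- For `A = (a, s)` and `A' = (a', s')` in `V × ℝ` and the point `z = (x, t)` of the upper
half-space, the quotient `⟨A, z⟩ ⟨A', z⟩ / |z| ^ (dim V + 3)`. Up to a constant multiple of `t`, the
entries of the Poisson-type kernel are these quotients for coordinate vectors `A` and `A'`. -/
def poissonTypeQuotient (a : V) (s : ℝ) (a' : V) (s' t : ℝ) (x : V) : ℝ :=
  (inner ℝ a x + s * t) * (inner ℝ a' x + s' * t) /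
    (‖x‖ ^ 2 + t ^ 2) ^ (((Module.finrank ℝ V : ℝ) + 3) / 2)

variable (a a' : V) (s s' : ℝ) {t : ℝ}

theorem sq_inner_add_mul_le (t : ℝ) (x : V) :
    (inner ℝ a x + s * t) ^ 2 ≤ (‖a‖ ^ 2 + s ^ 2) * (‖x‖ ^ 2 + t ^ 2) := by
  have habs : |inner ℝ a x + s * t| ≤ ‖a‖ * ‖x‖ + |s| * |t| := by
    rw [← abs_mul]
    exact (abs_add_le _ _).trans (by gcongr; exact abs_real_inner_le_norm a x)
  calc (inner ℝ a x + s * t) ^ 2 ≤ (‖a‖ * ‖x‖ + |s| * |t|) ^ 2 :=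
        sq_le_sq' (abs_le.1 habs).1 (abs_le.1 habs).2
    _ ≤ (‖a‖ ^ 2 + |s| ^ 2) * (‖x‖ ^ 2 + |t| ^ 2) := by
        nlinarith [sq_nonneg (‖a‖ * |t| - |s| * ‖x‖)]
    _ = (‖a‖ ^ 2 + s ^ 2) * (‖x‖ ^ 2 + t ^ 2) := by rw [sq_abs, sq_abs]

theorem abs_poissonTypeQuotient_le (ht : t ≠ 0) (x : V) :
    |poissonTypeQuotient a s a' s' t x| ≤ ((‖a‖ ^ 2 + s ^ 2) + (‖a'‖ ^ 2 + s' ^ 2)) / 2 *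
      (‖x‖ ^ 2 + t ^ 2) ^ (-((Module.finrank ℝ V : ℝ) + 1) / 2) := by
  have hpos : 0 < ‖x‖ ^ 2 + t ^ 2 := by positivity
  have hexp : (-((Module.finrank ℝ V : ℝ) + 1) / 2) = 1 - ((Module.finrank ℝ V : ℝ) + 3) / 2 := by
    ring
  rw [poissonTypeQuotient, abs_div, abs_of_pos (Real.rpow_pos_of_pos hpos _), hexp,
    Real.rpow_sub hpos, Real.rpow_one, ← mul_div_assoc]
  gcongr
  have hu := sq_inner_add_mul_le a s t x
  have hu' := sq_inner_add_mul_le a' s' t x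
  rw [abs_mul]
  nlinarith [two_mul_le_add_sq |inner ℝ a x + s * t| |inner ℝ a' x + s' * t|,
    sq_abs (inner ℝ a x + s * t), sq_abs (inner ℝ a' x + s' * t)]

theorem continuous_poissonTypeQuotient (ht : t ≠ 0) :
    Continuous (poissonTypeQuotient a s a' s' t) := by
  have hpos (x : V) : 0 < ‖x‖ ^ 2 + t ^ 2 := by positivity
  unfold poissonTypeQuotient
  refine Continuous.div (by fun_prop) (Continuous.rpow_const (by fun_prop) fun x ↦ ?_) fun x ↦ ?_
  · exact Or.inl (hpos x).ne'
  · exact (Real.rpow_pos_of_pos (hpos x) _).ne'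

variable [FiniteDimensional ℝ V] [MeasurableSpace V] [BorelSpace V]

theorem integrable_rpow_norm_sq_add_sq (ht : t ≠ 0) {r : ℝ} (hr : (Module.finrank ℝ V : ℝ) < r) :
    Integrable fun x : V ↦ (‖x‖ ^ 2 + t ^ 2) ^ (-r / 2) := by
  have hscaled := ((integrable_rpow_neg_one_add_norm_sq (μ := (volume : Measure V)) hr).comp_smul
    (inv_ne_zero ht)).const_mul ((t ^ 2) ^ (-r / 2))
  refine hscaled.congr (ae_of_all _ fun x ↦ ?_)
  dsimp only
  rw [← Real.mul_rpow (by positivity) (by positivity), norm_smul, mul_pow, Real.norm_eq_abs, sq_abs]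
  congr 1
  field_simp
  ring

theorem integrable_poissonTypeQuotient (ht : t ≠ 0) :
    Integrable (poissonTypeQuotient a s a' s' t) :=
  ((integrable_rpow_norm_sq_add_sq ht (lt_add_one _)).const_mul _).mono'
    (continuous_poissonTypeQuotient a a' s s' ht).aestronglyMeasurable
    (ae_of_all _ (abs_poissonTypeQuotient_le a a' s s' ht))

theorem integral_complexGaussian_neg_two_pi_I {v : ℝ} (hv : 0 < v) (ξ : V) :
    ∫ x, complexGaussian v (-2 * Real.pi * Complex.I) ξ x =
      ((Real.pi / v) ^ ((Module.finrank ℝ V : ℝ) / 2) : ℝ) *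
        (Real.exp (-((Real.pi * ‖ξ‖) ^ 2 / v)) : ℝ) := by
  have hvC : (v : ℂ) ≠ 0 := by exact_mod_cast hv.ne'
  unfold complexGaussian
  rw [GaussianFourier.integral_cexp_neg_mul_sq_norm_add (by simpa using hv),
    Complex.ofReal_cpow (by positivity), Complex.ofReal_exp]
  push_cast
  congr 2
  field_simp
  rw [Complex.I_sq]
  ring

theorem rpow_mul_exp_mul_eq_gigDensity {v : ℝ} (hv : 0 < v) (n t μ : ℝ) :
    v ^ ((n + 3) / 2 - 1) * (Real.exp (-(t ^ 2 * v)) *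
      ((Real.pi / v) ^ (n / 2) * Real.exp (-(μ ^ 2 / v)))) =
        Real.pi ^ (n / 2) * gigDensity t μ (1 / 2) v := by
  have hpow : v ^ ((n + 3) / 2 - 1) * (Real.pi / v) ^ (n / 2) =
      Real.pi ^ (n / 2) * v ^ (1 / 2 : ℝ) := by
    rw [Real.div_rpow Real.pi_pos.le hv.le, mul_div_left_comm, ← Real.rpow_sub hv]
    congr 2
    ring
  rw [gigDensity, neg_add, Real.exp_add]
  linear_combination (Real.exp (-(t ^ 2 * v)) * Real.exp (-(μ ^ 2 / v))) * hpow

theorem rpow_mul_exp_mul_integral_affine_mul_affine_mul_complexGaussian {v : ℝ} (hv : 0 < v)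
    (ξ : V) (t : ℝ) :
    (v ^ (((Module.finrank ℝ V : ℝ) + 3) / 2 - 1) : ℝ) * ((Real.exp (-(t ^ 2 * v)) : ℝ) *
      ∫ x, ((inner ℝ a x : ℂ) + (s * t : ℝ)) * ((inner ℝ a' x : ℂ) + (s' * t : ℝ)) *
        complexGaussian v (-2 * Real.pi * Complex.I) ξ x) =
      (Real.pi ^ ((Module.finrank ℝ V : ℝ) / 2) : ℝ) * ((s * s' * t ^ 2 +
        (inner ℝ a a' / 2 - Complex.I * Real.pi * t * (s * inner ℝ a' ξ + s' * inner ℝ a ξ)) / v +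
          -(Real.pi ^ 2 * inner ℝ a ξ * inner ℝ a' ξ) / v ^ 2) *
            gigDensity t (Real.pi * ‖ξ‖) (1 / 2) v) := by
  set P : ℂ := s * s' * t ^ 2 +
    (inner ℝ a a' / 2 - Complex.I * Real.pi * t * (s * inner ℝ a' ξ + s' * inner ℝ a ξ)) / v +
      -(Real.pi ^ 2 * inner ℝ a ξ * inner ℝ a' ξ) / v ^ 2 with hP
  have hvC : (v : ℂ) ≠ 0 := by exact_mod_cast hv.ne'
  have hcoeff : (-2 * Real.pi * Complex.I * inner ℝ a ξ / (2 * v) + (s * t : ℝ)) *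
      (-2 * Real.pi * Complex.I * inner ℝ a' ξ / (2 * v) + (s' * t : ℝ)) +
        inner ℝ a a' / (2 * v) = P := by
    rw [hP]
    field_simp
    push_cast
    linear_combination (2 * Real.pi ^ 2 * inner ℝ a ξ * inner ℝ a' ξ : ℂ) * Complex.I_sq
  have hdensity := congrArg Complex.ofReal
    (rpow_mul_exp_mul_eq_gigDensity hv (Module.finrank ℝ V) t (Real.pi * ‖ξ‖))
  simp only [Complex.ofReal_mul] at hdensity
  rw [integral_affine_mul_affine_mul_complexGaussian _ _ (by simpa using hv),
    integral_complexGaussian_neg_two_pi_I hv, hcoeff]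
  linear_combination P * hdensity

open scoped FourierTransform

theorem Gamma_mul_fourier_poissonTypeQuotient (ht : t ≠ 0) (ξ : V) :
    Real.Gamma (((Module.finrank ℝ V : ℝ) + 3) / 2) *
      𝓕 (fun x ↦ (poissonTypeQuotient a s a' s' t x : ℂ)) ξ =
      (Real.pi ^ ((Module.finrank ℝ V : ℝ) / 2) : ℝ) * ∫ v in Ioi (0 : ℝ), (s * s' * t ^ 2 +
        (inner ℝ a a' / 2 - Complex.I * Real.pi * t * (s * inner ℝ a' ξ + s' * inner ℝ a ξ)) / v +
          -(Real.pi ^ 2 * inner ℝ a ξ * inner ℝ a' ξ) / v ^ 2) *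
            gigDensity t (Real.pi * ‖ξ‖) (1 / 2) v := by
  set F : V → ℂ := fun x ↦ ((inner ℝ a x : ℂ) + (s * t : ℝ)) * ((inner ℝ a' x : ℂ) + (s' * t : ℝ)) *
    Complex.exp (-2 * Real.pi * Complex.I * inner ℝ ξ x)
  have hF (x : V) : F x / ((‖x‖ ^ 2 + t ^ 2) ^ (((Module.finrank ℝ V : ℝ) + 3) / 2) : ℝ) =
      Complex.exp ((-2 * Real.pi * inner ℝ x ξ : ℝ) * Complex.I) •
        (poissonTypeQuotient a s a' s' t x : ℂ) := by
    simp only [F, poissonTypeQuotient, real_inner_comm ξ x, smul_eq_mul]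
    push_cast
    ring_nf
  have hint : Integrable fun x ↦
      F x / ((‖x‖ ^ 2 + t ^ 2) ^ (((Module.finrank ℝ V : ℝ) + 3) / 2) : ℝ) := by
    simp only [hF]
    refine (integrable_poissonTypeQuotient a a' s s' ht).ofReal.bdd_mul (c := 1)
      (by fun_prop) (ae_of_all _ fun x ↦ ?_)
    rw [Complex.norm_exp_ofReal_mul_I]
  have hgauss (v : ℝ) (x : V) : Real.exp (-((‖x‖ ^ 2 + t ^ 2) * v)) * F x =
      Real.exp (-(t ^ 2 * v)) * (((inner ℝ a x : ℂ) + (s * t : ℝ)) *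
        ((inner ℝ a' x : ℂ) + (s' * t : ℝ)) *
          complexGaussian v (-2 * Real.pi * Complex.I) ξ x) := by
    have hexp : Complex.exp (-((‖x‖ ^ 2 + t ^ 2) * v)) =
        Complex.exp (-(t ^ 2 * v)) * Complex.exp (-v * ‖x‖ ^ 2) := by
      rw [← Complex.exp_add]
      ring_nf
    simp only [F, complexGaussian, Complex.exp_add]
    push_cast
    rw [hexp]
    ring
  rw [Real.fourier_eq']
  simp only [← hF]
  rw [Gamma_mul_integral_div_rpow (by positivity) (fun x ↦ by positivity) (by fun_prop) hint,
    ← integral_const_mul]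
  refine setIntegral_congr_fun measurableSet_Ioi fun v (hv : 0 < v) ↦ ?_
  simp only [hgauss, integral_const_mul]
  exact rpow_mul_exp_mul_integral_affine_mul_affine_mul_complexGaussian a a' s s' hv ξ t

theorem fourier_poissonTypeQuotient (ht : 0 < t) (ξ : V) :
    𝓕 (fun x ↦ (poissonTypeQuotient a s a' s' t x : ℂ)) ξ =
      (√Real.pi * Real.pi ^ ((Module.finrank ℝ V : ℝ) / 2) /
        Real.Gamma (((Module.finrank ℝ V : ℝ) + 3) / 2) : ℝ) *
      (Real.exp (-(2 * Real.pi * t * ‖ξ‖)) * ((inner ℝ a a' + s * s') / (2 * t) +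
        Real.pi / ‖ξ‖ * ((s * ‖ξ‖ - Complex.I * inner ℝ a ξ) *
          (s' * ‖ξ‖ - Complex.I * inner ℝ a' ξ)))) := by
  have hΓ : ((Real.Gamma (((Module.finrank ℝ V : ℝ) + 3) / 2) : ℝ) : ℂ) ≠ 0 := by
    exact_mod_cast (Real.Gamma_pos_of_pos (by positivity)).ne'
  have htC : (t : ℂ) ≠ 0 := by exact_mod_cast ht.ne'
  rw [← mul_right_inj' hΓ, Gamma_mul_fourier_poissonTypeQuotient a a' s s' ht.ne' ξ,
    integral_laurent_mul_gigDensity ht (by positivity) _ _ _ (by simp +contextual)]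
  have hexp : 2 * t * (Real.pi * ‖ξ‖) = 2 * Real.pi * t * ‖ξ‖ := by ring
  rw [hexp]
  obtain rfl | hξ := eq_or_ne ξ 0
  · simp only [norm_zero, inner_zero_right, Complex.ofReal_zero, mul_zero, neg_zero, zero_div,
      div_zero, sub_zero, add_zero, Real.exp_zero, Complex.ofReal_one, mul_one, one_mul]
    push_cast
    field_simp
    ring
  have hξC : (‖ξ‖ : ℂ) ≠ 0 := by simpa using hξ
  push_cast
  field_simp
  linear_combination (-((Real.pi ^ ((Module.finrank ℝ V : ℝ) / 2) : ℝ) : ℂ) *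
    2 * Real.pi * t * inner ℝ a ξ * inner ℝ a' ξ) * Complex.I_sq

end FourierTransform

section Convolution

open scoped Convolution FourierTransform

variable {V : Type*} [NormedAddCommGroup V] [InnerProductSpace ℝ V] [FiniteDimensional ℝ V]
  [MeasurableSpace V] [BorelSpace V] {E : Type*} [NormedAddCommGroup E] [NormedSpace ℂ E]

theorem continuous_fourier {f : V → E} (hf : Integrable f) : Continuous (𝓕 f) :=
  VectorFourier.fourierIntegral_continuous Real.continuous_fourierChar continuous_inner hf

theorem norm_fourier_le_integral_norm (f : V → E) (ξ : V) : ‖𝓕 f ξ‖ ≤ ∫ x, ‖f x‖ :=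
  VectorFourier.norm_fourierIntegral_le_integral_norm _ _ _ _ _

theorem norm_fourierInv_le_integral_norm (f : V → E) (x : V) : ‖𝓕⁻ f x‖ ≤ ∫ ξ, ‖f ξ‖ := by
  rw [Real.fourierInv_eq_fourier_neg]
  exact norm_fourier_le_integral_norm f (-x)

theorem integrable_fourier_mul_fourier {f g : V → ℂ} (hf : Integrable f)
    (hg : Integrable (𝓕 g)) : Integrable fun ξ ↦ 𝓕 f ξ * 𝓕 g ξ :=
  hg.bdd_mul (continuous_fourier hf).aestronglyMeasurable
    (ae_of_all _ (norm_fourier_le_integral_norm f))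

theorem integral_mul_sub_eq_fourierInv {f g : V → ℂ} (hf : Integrable f) (hg : Integrable g)
    (hg_cont : Continuous g) (hg_fourier : Integrable (𝓕 g)) (x : V) :
    ∫ y, f y * g (x - y) = 𝓕⁻ (fun ξ ↦ 𝓕 f ξ * 𝓕 g ξ) x := by
  have hg_bdd : BddAbove (range fun x ↦ ‖g x‖) := by
    refine ⟨∫ ξ, ‖𝓕 g ξ‖, forall_mem_range.2 fun y ↦ ?_⟩
    rw [← congrFun (hg_cont.fourierInv_fourier_eq hg hg_fourier) y]
    exact norm_fourierInv_le_integral_norm _ y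
  have hconv_cont : Continuous (f ⋆[ContinuousLinearMap.mul ℂ ℂ] g) :=
    hg_bdd.continuous_convolution_right_of_integrable _ hf hg_cont
  have hconv_fourier : 𝓕 (f ⋆[ContinuousLinearMap.mul ℂ ℂ] g) = fun ξ ↦ 𝓕 f ξ * 𝓕 g ξ :=
    funext (Real.fourier_mul_convolution_eq hf hg)
  rw [← hconv_fourier, hconv_cont.fourierInv_fourier_eq (hf.integrable_convolution _ hg)
    (hconv_fourier ▸ integrable_fourier_mul_fourier hf hg_fourier), convolution_def]
  rfl

theorem fourierInv_finsetSum {ι : Type*} (S : Finset ι) {f : ι → V → E}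
    (hf : ∀ i ∈ S, Integrable (f i)) (x : V) :
    𝓕⁻ (fun ξ ↦ ∑ i ∈ S, f i ξ) x = ∑ i ∈ S, 𝓕⁻ (f i) x := by
  simp only [Real.fourierInv_eq, Finset.smul_sum]
  refine integral_finsetSum S fun i hi ↦ ?_
  simpa using (Real.fourierIntegral_convergent_iff (-x)).2 (hf i hi)

theorem integrable_exp_neg_mul_norm {c : ℝ} (hc : 0 < c) :
    Integrable fun x : V ↦ Real.exp (-(c * ‖x‖)) := by
  set n := Module.finrank ℝ V + 1 with hn
  have hdom := (integrable_one_add_norm (μ := (volume : Measure V)) (r := n)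
    (by rw [hn]; exact_mod_cast Nat.lt_succ_self _)).const_mul
      (n.factorial / c ^ n * Real.exp c)
  refine hdom.mono' (by fun_prop) (ae_of_all _ fun x ↦ ?_)
  have hpow := one_add_pow_le_mul_exp hc (norm_nonneg x) n
  have hexp : Real.exp (c * (1 + ‖x‖)) = Real.exp c * Real.exp (c * ‖x‖) := by
    rw [← Real.exp_add]
    ring_nf
  rw [Real.norm_of_nonneg (Real.exp_nonneg _), Real.rpow_neg (by positivity), Real.rpow_natCast,
    Real.exp_neg, ← div_eq_mul_inv, inv_le_comm₀ (by positivity) (by positivity), inv_div,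
    div_le_iff₀ (by positivity)]
  rw [hexp] at hpow
  linarith

end Convolution

section Symbol

theorem one_add_smul_vecMulVec_mul {ι R : Type*} [Fintype ι] [DecidableEq ι] [CommRing R]
    {v : ι → R} (hv : v ⬝ᵥ v = 0) (a b : R) :
    (1 + a • Matrix.vecMulVec v v) * (1 + b • Matrix.vecMulVec v v) =
      1 + (a + b) • Matrix.vecMulVec v v := by
  have hsq : Matrix.vecMulVec v v * Matrix.vecMulVec v v = 0 := by
    simp [Matrix.vecMulVec_mul_vecMulVec, hv]
  simp only [add_mul, mul_add, one_mul, mul_one, smul_mul_assoc, mul_smul_comm, hsq, smul_zero,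
    add_zero, add_smul]
  abel

variable {d : ℕ}

/-- The vector `(-iξ, |ξ|)` in `ℂ ^ (d + 1)`: the logarithmic gradient in `(x, t)` of the harmonic
function `exp (-i⟪ξ, x⟫ + t|ξ|)`, whose harmonicity amounts to the isotropy of this vector. -/
def isotropicVec (ξ : Ed d) : Fin (d + 1) → ℂ :=
  Fin.snoc (fun i ↦ -Complex.I * ξ i) ‖ξ‖

theorem isotropicVec_dotProduct_self (ξ : Ed d) : isotropicVec ξ ⬝ᵥ isotropicVec ξ = 0 := by
  have hnorm : ((‖ξ‖ : ℝ) : ℂ) ^ 2 = ∑ i, (ξ i : ℂ) ^ 2 := by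
    exact_mod_cast EuclideanSpace.real_norm_sq_eq ξ
  have hsq (i : Fin d) : -Complex.I * ξ i * (-Complex.I * ξ i) = -(ξ i : ℂ) ^ 2 := by
    linear_combination (ξ i : ℂ) ^ 2 * Complex.I_sq
  simp only [dotProduct, isotropicVec, Fin.sum_univ_castSucc, Fin.snoc_castSucc, Fin.snoc_last, hsq,
    Finset.sum_neg_distrib, ← hnorm]
  ring

theorem norm_isotropicVec_apply_le (ξ : Ed d) (j : Fin (d + 1)) : ‖isotropicVec ξ j‖ ≤ ‖ξ‖ := by
  refine Fin.lastCases ?_ (fun i ↦ ?_) j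
  · simp [isotropicVec]
  · simpa [isotropicVec] using PiLp.norm_apply_le ξ i

/-- The Fourier transform of the Poisson-type kernel `ℙ_t`. Since `x / 0 = 0`, the formula also
gives the right value, the identity matrix, at `ξ = 0`. -/
def poissonTypeSymbol (t : ℝ) (ξ : Ed d) : Matrix (Fin (d + 1)) (Fin (d + 1)) ℂ :=
  (Real.exp (-(2 * Real.pi * t * ‖ξ‖)) : ℂ) •
    (1 + (2 * Real.pi * t / ‖ξ‖ : ℂ) • Matrix.vecMulVec (isotropicVec ξ) (isotropicVec ξ))

theorem poissonTypeSymbol_mul (t₁ t₂ : ℝ) (ξ : Ed d) :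
    poissonTypeSymbol t₁ ξ * poissonTypeSymbol t₂ ξ = poissonTypeSymbol (t₁ + t₂) ξ := by
  simp only [poissonTypeSymbol, smul_mul_assoc, mul_smul_comm, smul_smul,
    one_add_smul_vecMulVec_mul (isotropicVec_dotProduct_self ξ), ← Complex.ofReal_mul,
    ← Real.exp_add]
  push_cast
  ring_nf

theorem norm_poissonTypeSymbol_apply_le {t : ℝ} (ht : 0 ≤ t) (ξ : Ed d) (j k : Fin (d + 1)) :
    ‖poissonTypeSymbol t ξ j k‖ ≤ 2 * Real.exp (-(Real.pi * t * ‖ξ‖)) := by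
  have hone : ‖(1 : Matrix (Fin (d + 1)) (Fin (d + 1)) ℂ) j k‖ ≤ 1 := by
    rw [Matrix.one_apply]
    split_ifs <;> simp
  have hvec : ‖(2 * Real.pi * t / ‖ξ‖ : ℂ) * (isotropicVec ξ j * isotropicVec ξ k)‖ ≤
      2 * (Real.pi * t * ‖ξ‖) := by
    calc _ = 2 * Real.pi * t / ‖ξ‖ * (‖isotropicVec ξ j‖ * ‖isotropicVec ξ k‖) := by
          simp [abs_of_pos Real.pi_pos, abs_of_nonneg ht]
      _ ≤ 2 * Real.pi * t / ‖ξ‖ * (‖ξ‖ * ‖ξ‖) := by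
          gcongr <;> exact norm_isotropicVec_apply_le ξ _
      _ = 2 * (Real.pi * t * ‖ξ‖) := by
          rw [div_mul_eq_mul_div, mul_div_assoc, mul_self_div_self]
          ring
  have hlinear := Real.add_one_le_exp (Real.pi * t * ‖ξ‖)
  calc ‖poissonTypeSymbol t ξ j k‖
      ≤ Real.exp (-(2 * Real.pi * t * ‖ξ‖)) * (1 + 2 * (Real.pi * t * ‖ξ‖)) := by
        rw [poissonTypeSymbol, Matrix.smul_apply, smul_eq_mul, norm_mul,
          Complex.norm_of_nonneg (Real.exp_nonneg _)]
        gcongr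
        exact (norm_add_le _ _).trans (add_le_add hone hvec)
    _ ≤ Real.exp (-(2 * Real.pi * t * ‖ξ‖)) * (2 * Real.exp (Real.pi * t * ‖ξ‖)) := by
        gcongr
        linarith
    _ = 2 * Real.exp (-(Real.pi * t * ‖ξ‖)) := by
        rw [mul_left_comm, ← Real.exp_add]
        ring_nf

end Symbol

section Kernel

open scoped FourierTransform

variable {d : ℕ}

/-- The component in `ℝ ^ d` of the `j`-th coordinate vector of `ℝ ^ d × ℝ`. -/
def spatialBasis (j : Fin (d + 1)) : Ed d :=
  Fin.snoc (α := fun _ ↦ Ed d) (fun i ↦ EuclideanSpace.single i 1) 0 j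

/-- The last component of the `j`-th coordinate vector of `ℝ ^ d × ℝ`. -/
def timeBasis (j : Fin (d + 1)) : ℝ := Fin.snoc (α := fun _ ↦ ℝ) (fun _ : Fin d ↦ 0) 1 j

theorem snocVec_eq_inner_add (x : Ed d) (t : ℝ) (j : Fin (d + 1)) :
    snocVec d x t j = inner ℝ (spatialBasis j) x + timeBasis j * t := by
  refine Fin.lastCases ?_ (fun i ↦ ?_) j <;>
    simp [snocVec, spatialBasis, timeBasis, EuclideanSpace.inner_single_left]

theorem isotropicVec_eq_sub_inner (ξ : Ed d) (j : Fin (d + 1)) :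
    isotropicVec ξ j = timeBasis j * ‖ξ‖ - Complex.I * inner ℝ (spatialBasis j) ξ := by
  refine Fin.lastCases ?_ (fun i ↦ ?_) j <;>
    simp [isotropicVec, spatialBasis, timeBasis, EuclideanSpace.inner_single_left]

theorem inner_spatialBasis_add_timeBasis_mul (j k : Fin (d + 1)) :
    inner ℝ (spatialBasis j) (spatialBasis k) + timeBasis j * timeBasis k =
      (1 : Matrix (Fin (d + 1)) (Fin (d + 1)) ℝ) j k := by
  refine Fin.lastCases ?_ (fun i ↦ ?_) j <;> refine Fin.lastCases ?_ (fun l ↦ ?_) k <;>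
    simp [spatialBasis, timeBasis, Matrix.one_apply, EuclideanSpace.inner_single_left,
      Fin.castSucc_ne_last, (Fin.castSucc_ne_last _).symm]

theorem pEntry_eq_mul_poissonTypeQuotient (t : ℝ) (j k : Fin (d + 1)) (x : Ed d) :
    pEntry d t j k x = 2 * ((d : ℝ) + 1) / sphereVol d * t *
      poissonTypeQuotient (spatialBasis j) (timeBasis j) (spatialBasis k) (timeBasis k) t x := by
  rw [pEntry, poissonTypeQuotient, snocVec_eq_inner_add, snocVec_eq_inner_add,
    finrank_euclideanSpace_fin]
  ring

theorem div_sphereVol_mul_div_Gamma (d : ℕ) :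
    2 * ((d : ℝ) + 1) / sphereVol d *
      (√Real.pi * Real.pi ^ ((d : ℝ) / 2) / Real.Gamma (((d : ℝ) + 3) / 2)) = 2 := by
  have hdim : ((d + 1 : ℕ) : ℝ) / 2 + 1 = ((d : ℝ) + 3) / 2 := by
    push_cast
    ring
  rw [sphereVol, EuclideanSpace.volume_ball, Fintype.card_fin, hdim, ENNReal.ofReal_one, one_pow,
    one_mul, ENNReal.toReal_ofReal (by positivity), Real.rpow_div_two_eq_sqrt _ Real.pi_pos.le,
    Real.rpow_natCast, ← pow_succ']
  field_simp

variable {t : ℝ}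

theorem continuous_ofReal_pEntry (ht : t ≠ 0) (j k : Fin (d + 1)) :
    Continuous fun x ↦ (pEntry d t j k x : ℂ) := by
  simp only [pEntry_eq_mul_poissonTypeQuotient]
  exact Complex.continuous_ofReal.comp ((continuous_poissonTypeQuotient _ _ _ _ ht).const_mul _)

theorem integrable_ofReal_pEntry (ht : t ≠ 0) (j k : Fin (d + 1)) :
    Integrable fun x ↦ (pEntry d t j k x : ℂ) := by
  simp only [pEntry_eq_mul_poissonTypeQuotient]
  exact ((integrable_poissonTypeQuotient _ _ _ _ ht).const_mul _).ofReal

theorem fourier_pEntry (ht : 0 < t) (j k : Fin (d + 1)) :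
    𝓕 (fun x ↦ (pEntry d t j k x : ℂ)) = fun ξ ↦ poissonTypeSymbol t ξ j k := by
  set c := 2 * ((d : ℝ) + 1) / sphereVol d with hc
  set Q : Ed d → ℂ := fun x ↦
    (poissonTypeQuotient (spatialBasis j) (timeBasis j) (spatialBasis k) (timeBasis k) t x : ℂ)
  have hscale : 𝓕 (fun x ↦ (pEntry d t j k x : ℂ)) = ((c * t : ℝ) : ℂ) • 𝓕 Q := by
    have hsmul : (fun x ↦ (pEntry d t j k x : ℂ)) = ((c * t : ℝ) : ℂ) • Q := by
      ext x
      simp [pEntry_eq_mul_poissonTypeQuotient, Q, hc]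
    rw [hsmul]
    exact VectorFourier.fourierIntegral_const_smul _ _ _ _ _
  have hδ : (inner ℝ (spatialBasis j) (spatialBasis k) + timeBasis j * timeBasis k : ℂ) =
      (1 : Matrix (Fin (d + 1)) (Fin (d + 1)) ℂ) j k := by
    have h := congrArg Complex.ofReal (inner_spatialBasis_add_timeBasis_mul j k)
    simpa [Matrix.one_apply, apply_ite] using h
  have htC : (t : ℂ) ≠ 0 := by exact_mod_cast ht.ne'
  ext ξ
  rw [hscale, Pi.smul_apply, fourier_poissonTypeQuotient _ _ _ _ ht, hδ,
    ← isotropicVec_eq_sub_inner, ← isotropicVec_eq_sub_inner, finrank_euclideanSpace_fin,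
    smul_eq_mul, ← mul_assoc, ← Complex.ofReal_mul, mul_right_comm, div_sphereVol_mul_div_Gamma]
  simp only [poissonTypeSymbol, Matrix.smul_apply, Matrix.add_apply, Matrix.vecMulVec_apply,
    smul_eq_mul]
  push_cast
  field_simp

theorem integrable_fourier_pEntry (ht : 0 < t) (j k : Fin (d + 1)) :
    Integrable (𝓕 fun x ↦ (pEntry d t j k x : ℂ)) := by
  refine ((integrable_exp_neg_mul_norm (by positivity : 0 < Real.pi * t)).const_mul 2).mono'
    (continuous_fourier (integrable_ofReal_pEntry ht.ne' j k)).aestronglyMeasurable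
    (ae_of_all _ fun ξ ↦ ?_)
  rw [fourier_pEntry ht]
  exact norm_poissonTypeSymbol_apply_le ht.le ξ j k

theorem fourierInv_poissonTypeSymbol (ht : 0 < t) (j k : Fin (d + 1)) (x : Ed d) :
    𝓕⁻ (fun ξ ↦ poissonTypeSymbol t ξ j k) x = pEntry d t j k x := by
  rw [← fourier_pEntry ht]
  exact congrFun ((continuous_ofReal_pEntry ht.ne' j k).fourierInv_fourier_eq
    (integrable_ofReal_pEntry ht.ne' j k) (integrable_fourier_pEntry ht j k)) x

variable {t₁ t₂ : ℝ}

theorem integrable_poissonTypeSymbol_mul (ht₁ : 0 < t₁) (ht₂ : 0 < t₂) (j k l m : Fin (d + 1)) :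
    Integrable fun ξ ↦ poissonTypeSymbol t₁ ξ j k * poissonTypeSymbol t₂ ξ l m := by
  simpa only [fourier_pEntry ht₁, fourier_pEntry ht₂] using
    integrable_fourier_mul_fourier (integrable_ofReal_pEntry ht₁.ne' j k)
      (integrable_fourier_pEntry ht₂ l m)

theorem integral_pEntry_mul_pEntry_sub (ht₁ : 0 < t₁) (ht₂ : 0 < t₂) (j k l m : Fin (d + 1))
    (x : Ed d) :
    ((∫ y, pEntry d t₁ j k y * pEntry d t₂ l m (x - y) : ℝ) : ℂ) =
      𝓕⁻ (fun ξ ↦ poissonTypeSymbol t₁ ξ j k * poissonTypeSymbol t₂ ξ l m) x := by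
  have hconv := integral_mul_sub_eq_fourierInv (integrable_ofReal_pEntry ht₁.ne' j k)
    (integrable_ofReal_pEntry ht₂.ne' l m)
    (continuous_ofReal_pEntry ht₂.ne' l m)
    (integrable_fourier_pEntry ht₂ l m) x
  simpa only [fourier_pEntry ht₁, fourier_pEntry ht₂, ← Complex.ofReal_mul,
    integral_complex_ofReal] using hconv

end Kernel

open scoped FourierTransform

/-- **Semigroup property of the Poisson-type kernel.** For all `t₁, t₂ > 0`,
`ℙ_{t₁} ∗ ℙ_{t₂} = ℙ_{t₁+t₂}`, the convolution taken in the sense of matrix multiplication: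
for every `x` and all indices `j, k`,
`Σ_ℓ ∫ 𝔭_{t₁}^{jℓ}(y) 𝔭_{t₂}^{ℓk}(x−y) dy = 𝔭_{t₁+t₂}^{jk}(x)`. -/
theorem pKernel_semigroup (d : ℕ) (t₁ t₂ : ℝ) (ht₁ : 0 < t₁) (ht₂ : 0 < t₂)
    (x : Ed d) (j k : Fin (d + 1)) :
    (∑ ℓ : Fin (d + 1), ∫ y : Ed d, pEntry d t₁ j ℓ y * pEntry d t₂ ℓ k (x - y)) =
      pEntry d (t₁ + t₂) j k x := by
  refine Complex.ofReal_injective ?_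
  calc ((∑ ℓ, ∫ y, pEntry d t₁ j ℓ y * pEntry d t₂ ℓ k (x - y) : ℝ) : ℂ)
      = ∑ ℓ, 𝓕⁻ (fun ξ ↦ poissonTypeSymbol t₁ ξ j ℓ * poissonTypeSymbol t₂ ξ ℓ k) x := by
        rw [Complex.ofReal_sum]
        exact Finset.sum_congr rfl fun ℓ _ ↦ integral_pEntry_mul_pEntry_sub ht₁ ht₂ j ℓ ℓ k x
    _ = 𝓕⁻ (fun ξ ↦ (poissonTypeSymbol t₁ ξ * poissonTypeSymbol t₂ ξ) j k) x := by
        simp only [Matrix.mul_apply]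
        exact (fourierInv_finsetSum _
          (fun ℓ _ ↦ integrable_poissonTypeSymbol_mul ht₁ ht₂ j ℓ ℓ k) x).symm
    _ = pEntry d (t₁ + t₂) j k x := by
        simp only [poissonTypeSymbol_mul]
        exact fourierInv_poissonTypeSymbol (add_pos ht₁ ht₂) j k x
end
end
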